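/- arXiv:0811.1966 — 9 statements merged into one kernel-verified Lean document; each statement's English description precedes it below -/
import Mathlib

section
/- Let $\underline{a}=\{a_n\}_{n=0}^\infty$ be an increasing sequence of non-negative integers, and put $x_n = 2^{-(a_n+1)}$ (viewed as an element of $\mathbb{T}=\mathbb{R}/\mathbb{Z}$ via the canonical projection). The set $K_{\underline{a},2} = \{0\} \cup \{\pm x_n \mid n \in \mathbb{N}\}$ is quasi-convex in $\mathbb{T}$ if and only if the following three conditions hold: (i) $a_0 > 0$; (ii) the gaps $g_n = a_{n+1} - a_n$ satisfy $g_n > 1$ for all but possibly one index $n \in \mathbb{N}$; (iii) if $g_n = 1$ for some $n \in \mathbb{N}$, then $g_{n+1} > 2$. -/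
/-!
Write `S = {a_n}`. Through the characters `x ↦ k x` of `𝕋`, everything reduces to the question, for
real `y`, whether `y` lies within `1/4` of an integer (`Near y`).

*Sufficiency.* In terms of `S` the conditions say that `0 ∉ S`, that at most one `q` has
`q, q + 1 ∈ S`, and that then `q + 2, q + 3 ∉ S`. Let `x` be in the hull. As `k = 1` is in the
polar and everything is symmetric, `x` is represented by some `r ∈ (0, 1/4]`. Choose `b` with
`u = 2^b r ∈ (1/8, 1/4]`. The character `2^(b+1)` does not send `r` to `𝕋₊`, and `2^e` is in the
polar for every `e ∉ S`, so `b + 1 ∈ S`. If `b + 1` has no neighbour in `S`, then `3 * 2^b` is in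
the polar, and `3u ∈ (3/8, 3/4]` forces `u = 1/4`, that is, `r = 2^(-(b+2))`
(`exists_mem_of_near`). Otherwise `b + 1` is one of two consecutive elements `d + 1, d + 2` of `S`,
and the characters `2^(d+3)`, `2^(d+4)` show that `8 * 2^d r` is at distance `t ≤ 1/8` from `1` or
`2`. If `t = 0`, then `r` is as desired. If `t > 0`, the argument above, applied to `t`, yields an
isolated `e + 1 ∈ S` with `2^e r ≡ ±1/4`, and then one of the characters `2^d - 2^e`,
`2^e - 7 * 2^d` is in the polar and separates `r` from `𝕋₊` (`core`).

*Necessity.* If a condition fails, an explicit element of the hull lies outside the set: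
`1/2 - x_2` if `a_0 = 0`; `x_{m+1} + x_{n+1}` if `g_m = g_n = 1` with `m < n`; and
`x_{n+1} + x_{n+2}` if `g_n = 1` and `g_{n+1} = 2`.
-/

noncomputable section

/-- The circle group `𝕋 = ℝ/ℤ`. -/
abbrev Circle1 : Type := AddCircle (1 : ℝ)

/-- The canonical projection `π : ℝ → 𝕋`. -/
def circleProj (r : ℝ) : Circle1 := (r : Circle1)

/-- `𝕋₊ = π([-1/4, 1/4])`. -/
def Tplus : Set Circle1 := circleProj '' Set.Icc (-(1/4) : ℝ) (1/4)

/-- The polar `E^▷` of a set `E ⊆ G`: all continuous characters mapping `E` into `𝕋₊`. -/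
def polar {G : Type} [AddCommGroup G] [TopologicalSpace G] (E : Set G) :
    Set (G →+ Circle1) :=
  {χ | Continuous χ ∧ ∀ x ∈ E, χ x ∈ Tplus}

/-- The quasi-convex hull `Q_G(E) = E^▷◁`. -/
def qcHull {G : Type} [AddCommGroup G] [TopologicalSpace G] (E : Set G) : Set G :=
  {x | ∀ χ ∈ polar E, χ x ∈ Tplus}

/-- A set is quasi-convex if it coincides with its quasi-convex hull. -/
def IsQuasiConvex {G : Type} [AddCommGroup G] [TopologicalSpace G] (E : Set G) : Prop :=
  qcHull E = E

/-- `y` is at distance at most `1/4` from an integer. -/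
def Near (y : ℝ) : Prop := ∃ z : ℤ, |y - z| ≤ 1 / 4

lemma proj_eq_iff (s t : ℝ) : circleProj s = circleProj t ↔ ∃ z : ℤ, s - t = z := by
  unfold circleProj
  rw [← sub_eq_zero, ← AddCircle.coe_sub, AddCircle.coe_eq_zero_iff]
  simp [eq_comm]

lemma proj_mem_iff (s : ℝ) : circleProj s ∈ Tplus ↔ Near s := by
  constructor
  · rintro ⟨t, ht, h⟩
    obtain ⟨z, hz⟩ := (proj_eq_iff t s).1 h
    refine ⟨-z, ?_⟩
    push_cast
    rw [← hz, abs_le]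
    constructor <;> linarith [ht.1, ht.2]
  · rintro ⟨z, hz⟩
    rw [abs_le] at hz
    exact ⟨s - z, ⟨by linarith, by linarith⟩, (proj_eq_iff _ _).2 ⟨-z, by push_cast; ring⟩⟩

lemma exists_rep {x : Circle1} (h : x ∈ Tplus) : ∃ t : ℝ, x = circleProj t ∧ |t| ≤ 1 / 4 := by
  obtain ⟨t, ht, rfl⟩ := h
  exact ⟨t, rfl, abs_le.2 ⟨by linarith [ht.1], by linarith [ht.2]⟩⟩

lemma near_of_abs {y : ℝ} (h : |y| ≤ 1 / 4) : Near y := ⟨0, by simpa using h⟩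

lemma near_neg {y : ℝ} (h : Near y) : Near (-y) := by
  obtain ⟨z, hz⟩ := h
  exact ⟨-z, by push_cast; rw [← abs_neg]; convert hz using 2; ring⟩

lemma not_near {y : ℝ} (z : ℤ) (h1 : z + 1 / 4 < y) (h2 : y < z + 3 / 4) : ¬ Near y := by
  rintro ⟨w, hw⟩
  rw [abs_le] at hw
  have a1 : (z : ℝ) < w := by linarith
  have a2 : (w : ℝ) < z + 1 := by linarith
  norm_cast at a1 a2
  omega

lemma near_shift {y : ℝ} (w : ℤ) (h : Near y) : Near (y + w) := by
  obtain ⟨z, hz⟩ := h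
  exact ⟨z + w, by push_cast; convert hz using 2; ring⟩

/-- If both `t ∈ [-1/4, 1/4]` and `2t` modulo `1` are in `𝕋₊`, then `t ∈ [-1/8, 1/8]`. -/
lemma half_of_near {t : ℝ} (h : |t| ≤ 1 / 4) (h2 : Near (2 * t)) : |t| ≤ 1 / 8 := by
  by_contra! hc
  rw [abs_le] at h
  rcases lt_abs.1 hc with h' | h'
  · exact not_near 0 (by push_cast; linarith) (by push_cast; linarith) h2
  · exact not_near (-1) (by push_cast; linarith) (by push_cast; linarith) h2

/-! ### Powers of two -/

lemma pow_int {e q : ℕ} (h : q ≤ e) : ∃ z : ℤ, (2 : ℝ) ^ e / 2 ^ q = z := by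
  obtain ⟨f, rfl⟩ := Nat.exists_eq_add_of_le h
  exact ⟨2 ^ f, by push_cast; rw [pow_add]; field_simp⟩

lemma pow_small {e q : ℕ} (i : ℕ) (h : e + i ≤ q) :
    0 < (2 : ℝ) ^ e / 2 ^ q ∧ (2 : ℝ) ^ e / 2 ^ q ≤ 1 / 2 ^ i := by
  refine ⟨by positivity, ?_⟩
  rw [div_le_div_iff₀ (by positivity) (by positivity), ← pow_add, one_mul]
  exact pow_le_pow_right₀ (by norm_num) h

lemma exists_pow {t : ℝ} (h0 : 0 < t) (h1 : t ≤ 1 / 4) :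
    ∃ b : ℕ, 1 / 8 < 2 ^ b * t ∧ 2 ^ b * t ≤ 1 / 4 := by
  obtain ⟨b, hb, hb'⟩ := exists_nat_pow_near (x := 1 / (4 * t)) (y := (2 : ℝ))
    (by rw [le_div_iff₀ (by positivity)]; linarith) (by norm_num)
  rw [le_div_iff₀ (by positivity)] at hb
  rw [div_lt_iff₀ (by positivity), pow_succ] at hb'
  exact ⟨b, by linarith, by linarith⟩

lemma not_between {p k : ℕ} {s : ℝ} (h1 : 1 / 2 ^ p < s) (h2 : s < 2 / 2 ^ p)
    (h : s = ((2 : ℝ) ^ k)⁻¹) : False := by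
  subst h
  rw [inv_eq_one_div] at h1 h2
  rw [div_lt_div_iff₀ (by positivity) (by positivity)] at h1 h2
  have hkp : (2 : ℝ) ^ k < 2 ^ p := by linarith
  have hpk : (2 : ℝ) ^ p < 2 ^ (k + 1) := by rw [pow_succ]; linarith
  rw [pow_lt_pow_iff_right₀ (by norm_num)] at hkp hpk
  omega

/-! ### Characters in the polar -/

/-- The character `x ↦ k x` maps every `2^(-(q+1))`, `q ∈ S`, to `𝕋₊`. -/
def InPolar (S : Set ℕ) (k : ℤ) : Prop := ∀ q ∈ S, Near (k / 2 ^ (q + 1))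

lemma polar_pow {S : Set ℕ} {e : ℕ} (he : e ∉ S) : InPolar S (2 ^ e) := by
  intro q hq
  have : q ≠ e := fun h => he (h ▸ hq)
  push_cast
  rcases lt_or_gt_of_ne this with h | h
  · obtain ⟨z, hz⟩ := pow_int (e := e) (q := q + 1) h
    exact ⟨z, by rw [hz]; norm_num⟩
  · have := pow_small (e := e) (q := q + 1) 2 (by omega)
    apply near_of_abs
    rw [abs_of_pos this.1]
    linarith [this.2]

lemma polar_three {S : Set ℕ} {e : ℕ} (h0 : e ∉ S) (h2 : e + 2 ∉ S) :
    InPolar S (3 * 2 ^ e) := by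
  intro q hq
  have n0 : q ≠ e := fun h => h0 (h ▸ hq)
  have n2 : q ≠ e + 2 := fun h => h2 (h ▸ hq)
  push_cast
  rw [mul_div_assoc]
  rcases lt_trichotomy q (e + 1) with h | h | h
  · obtain ⟨z, hz⟩ := pow_int (e := e) (q := q + 1) (by omega)
    exact ⟨3 * z, by rw [hz]; push_cast; norm_num⟩
  · refine ⟨1, ?_⟩
    subst h
    rw [show (3 : ℝ) * (2 ^ e / 2 ^ (e + 1 + 1)) = 3 / 4 by rw [pow_succ, pow_succ]; field_simp; norm_num]
    norm_num [abs_le]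
  · have := pow_small (e := e) (q := q + 1) 4 (by omega)
    apply near_of_abs
    rw [abs_le]
    constructor <;> linarith [this.1, this.2]

/-- The positions of `q ∈ S` relative to a consecutive pair `d + 1, d + 2` and an isolated element
`e + 1`, together with what they imply for `2^d / 2^(q+1)` and `2^e / 2^(q+1)`. -/
lemma pair_cases {S : Set ℕ} {d e q : ℕ} (hd : d ∉ S) (hd3 : d + 3 ∉ S) (hd4 : d + 4 ∉ S)
    (he : e ∉ S) (he2 : e + 2 ∉ S) (hde : d + 4 ≤ e) (hq : q ∈ S) :
    (∃ z w : ℤ, (2 : ℝ) ^ d / 2 ^ (q + 1) = z ∧ (2 : ℝ) ^ e / 2 ^ (q + 1) = w) ∨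
    (∃ w : ℤ, (2 : ℝ) ^ d / 2 ^ (q + 1) = 1 / 4 ∧ (2 : ℝ) ^ e / 2 ^ (q + 1) = w) ∨
    (∃ w : ℤ, (2 : ℝ) ^ d / 2 ^ (q + 1) = 1 / 8 ∧ (2 : ℝ) ^ e / 2 ^ (q + 1) = w) ∨
    (0 < (2 : ℝ) ^ d / 2 ^ (q + 1) ∧ (2 : ℝ) ^ d / 2 ^ (q + 1) ≤ 1 / 64 ∧
      ((∃ w : ℤ, (2 : ℝ) ^ e / 2 ^ (q + 1) = w) ∨ (2 : ℝ) ^ e / 2 ^ (q + 1) = 1 / 4 ∨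
        (0 < (2 : ℝ) ^ e / 2 ^ (q + 1) ∧ (2 : ℝ) ^ e / 2 ^ (q + 1) ≤ 1 / 16))) := by
  have n0 : q ≠ d := fun h => hd (h ▸ hq)
  have n3 : q ≠ d + 3 := fun h => hd3 (h ▸ hq)
  have n4 : q ≠ d + 4 := fun h => hd4 (h ▸ hq)
  have m0 : q ≠ e := fun h => he (h ▸ hq)
  have m2 : q ≠ e + 2 := fun h => he2 (h ▸ hq)
  rcases (by omega : q + 1 ≤ d ∨ q = d + 1 ∨ q = d + 2 ∨ d + 5 ≤ q) with h | h | h | h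
  · left
    obtain ⟨z, hz⟩ := pow_int h
    obtain ⟨w, hw⟩ := pow_int (e := e) (q := q + 1) (by omega)
    exact ⟨z, w, hz, hw⟩
  · right; left
    obtain ⟨w, hw⟩ := pow_int (e := e) (q := q + 1) (by omega)
    refine ⟨w, ?_, hw⟩
    subst h
    rw [pow_succ, pow_succ]; field_simp; norm_num
  · right; right; left
    obtain ⟨w, hw⟩ := pow_int (e := e) (q := q + 1) (by omega)
    refine ⟨w, ?_, hw⟩
    subst h
    rw [pow_succ, pow_succ, pow_succ]; field_simp; norm_num
  · right; right; right
    have h6 := pow_small (e := d) (q := q + 1) 6 (by omega)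
    refine ⟨h6.1, by linarith [h6.2], ?_⟩
    rcases (by omega : q + 1 ≤ e ∨ q = e + 1 ∨ e + 3 ≤ q) with h' | h' | h'
    · exact Or.inl (pow_int h')
    · right; left
      subst h'
      rw [pow_succ, pow_succ]; field_simp; norm_num
    · right; right
      have h4 := pow_small (e := e) (q := q + 1) 4 (by omega)
      exact ⟨h4.1, by linarith [h4.2]⟩

lemma polar_diff {S : Set ℕ} {d e : ℕ} (hd : d ∉ S) (hd3 : d + 3 ∉ S) (hd4 : d + 4 ∉ S)
    (he : e ∉ S) (he2 : e + 2 ∉ S) (hde : d + 4 ≤ e) : InPolar S (2 ^ d - 2 ^ e) := by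
  intro q hq
  push_cast
  rw [sub_div]
  rcases pair_cases hd hd3 hd4 he he2 hde hq with ⟨z, w, h1, h2⟩ | ⟨w, h1, h2⟩ | ⟨w, h1, h2⟩ |
    ⟨h1, h1', ⟨w, h2⟩ | h2 | ⟨h2, h2'⟩⟩
  · exact ⟨z - w, by rw [h1, h2]; push_cast; norm_num⟩
  · exact ⟨-w, by rw [h1, h2]; push_cast; norm_num⟩
  · exact ⟨-w, by rw [h1, h2, abs_le]; push_cast; constructor <;> linarith⟩
  · exact ⟨-w, by rw [h2, abs_le]; push_cast; constructor <;> linarith⟩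
  · exact ⟨0, by rw [h2, abs_le]; push_cast; constructor <;> linarith⟩
  · exact ⟨0, by rw [abs_le]; push_cast; constructor <;> linarith⟩

lemma polar_seven {S : Set ℕ} {d e : ℕ} (hd : d ∉ S) (hd3 : d + 3 ∉ S) (hd4 : d + 4 ∉ S)
    (he : e ∉ S) (he2 : e + 2 ∉ S) (hde : d + 4 ≤ e) : InPolar S (2 ^ e - 7 * 2 ^ d) := by
  intro q hq
  push_cast
  rw [sub_div, mul_div_assoc]
  rcases pair_cases hd hd3 hd4 he he2 hde hq with ⟨z, w, h1, h2⟩ | ⟨w, h1, h2⟩ | ⟨w, h1, h2⟩ |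
    ⟨h1, h1', ⟨w, h2⟩ | h2 | ⟨h2, h2'⟩⟩
  · exact ⟨w - 7 * z, by rw [h1, h2]; push_cast; norm_num⟩
  · exact ⟨w - 2, by rw [h1, h2, abs_le]; push_cast; constructor <;> linarith⟩
  · exact ⟨w - 1, by rw [h1, h2, abs_le]; push_cast; constructor <;> linarith⟩
  · exact ⟨w, by rw [h2, abs_le]; constructor <;> linarith⟩
  · exact ⟨0, by rw [h2, abs_le]; push_cast; constructor <;> linarith⟩
  · exact ⟨0, by rw [abs_le]; push_cast; constructor <;> linarith⟩

/-! ### Sufficiency -/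

/-- If `2^s r ≡ ± t` with `0 < t ≤ 1/4` for `r` in the hull, then scaling `t` by a power of two into
`(1/8, 1/4]` meets an element of `S`; if that element is isolated, the scaled value is `1/4`. -/
lemma exists_mem_of_near {S : Set ℕ} {r : ℝ} (H : ∀ k : ℤ, InPolar S k → Near (k * r))
    (s : ℕ) (t : ℝ) (z : ℤ) (h0 : 0 < t) (h1 : t ≤ 1 / 4)
    (hs : 2 ^ s * r = z + t ∨ 2 ^ s * r = z - t) :
    ∃ b : ℕ, 1 / 8 < 2 ^ b * t ∧ 2 ^ b * t ≤ 1 / 4 ∧ s + b + 1 ∈ S ∧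
      (s + b ∉ S → s + b + 2 ∉ S → 2 ^ b * t = 1 / 4) := by
  obtain ⟨b, hb, hb'⟩ := exists_pow h0 h1
  -- multiples of `2^(s+b) r` are congruent to the same multiples of `± 2^b t`
  have key : ∀ i : ℤ, Near (i * 2 ^ (s + b) * r) → Near (i * (2 ^ b * t)) := by
    intro i hi
    rcases hs with hs | hs
    · convert near_shift (-(i * 2 ^ b * z)) hi using 1
      push_cast
      rw [pow_add]
      linear_combination (-(i : ℝ) * 2 ^ b) * hs
    · convert near_neg (near_shift (-(i * 2 ^ b * z)) hi) using 1
      push_cast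
      rw [pow_add]
      linear_combination ((i : ℝ) * 2 ^ b) * hs
  refine ⟨b, hb, hb', ?_, ?_⟩
  · by_contra hc
    have h := H _ (polar_pow hc)
    have h := key 2 (by convert h using 1; push_cast; rw [pow_succ]; ring)
    exact not_near 0 (by push_cast; linarith) (by push_cast; linarith) h
  · intro g0 g2
    have h := H _ (polar_three g0 g2)
    have h := key 3 (by convert h using 1; push_cast; ring)
    by_contra hc
    have : 2 ^ b * t < 1 / 4 := lt_of_le_of_ne hb' hc
    exact not_near 0 (by push_cast; linarith) (by push_cast; linarith) h

lemma core {S : Set ℕ} (c2 : ∀ p q, p ∈ S → p + 1 ∈ S → q ∈ S → q + 1 ∈ S → p = q)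
    (c3 : ∀ p, p ∈ S → p + 1 ∈ S → p + 2 ∉ S ∧ p + 3 ∉ S) (c1 : 0 ∉ S)
    {r : ℝ} (h0 : 0 < r) (h1 : r ≤ 1 / 4) (H : ∀ k : ℤ, InPolar S k → Near (k * r)) :
    ∃ q ∈ S, r = ((2 : ℝ) ^ (q + 1))⁻¹ := by
  obtain ⟨b, hb, hb', hm, hreg⟩ := exists_mem_of_near H 0 r 0 h0 h1 (by simp)
  rw [zero_add] at hm hreg
  by_cases hr : b ∉ S ∧ b + 2 ∉ S
  · refine ⟨b + 1, hm, ?_⟩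
    have := hreg hr.1 hr.2
    apply eq_inv_of_mul_eq_one_left
    rw [pow_succ, pow_succ]
    linarith
  -- otherwise `b + 1` belongs to a consecutive pair `d + 1, d + 2`
  obtain ⟨d, hd1, hd2, hV1, hV2⟩ : ∃ d, d + 1 ∈ S ∧ d + 2 ∈ S ∧ 1 / 16 < 2 ^ d * r ∧
      2 ^ d * r ≤ 1 / 4 := by
    by_cases hbS : b ∈ S
    · have : b ≠ 0 := fun h => c1 (h ▸ hbS)
      obtain ⟨d, rfl⟩ := Nat.exists_eq_succ_of_ne_zero this
      rw [Nat.succ_eq_add_one, pow_succ] at hb hb'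
      exact ⟨d, hbS, hm, by linarith, by linarith⟩
    · exact ⟨b, hm, by tauto, by linarith, hb'⟩
  obtain ⟨hd3, hd4⟩ := c3 _ hd1 hd2
  have hd : d ∉ S := fun h => by
    have := c2 _ _ h hd1 hd1 hd2
    omega
  have isolated : ∀ q ∈ S, d + 3 ≤ q → q - 1 ∉ S ∧ q + 1 ∉ S := by
    intro q hq hq'
    refine ⟨fun h => ?_, fun h => ?_⟩
    · have := c2 _ _ h (by rwa [show q - 1 + 1 = q by omega]) hd1 hd2
      omega
    · have := c2 _ _ hq h hd1 hd2
      omega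
  set V := 2 ^ d * r with hV
  have N8 : Near (8 * V) := by
    convert H _ (polar_pow (e := d + 3) hd3) using 1
    push_cast; rw [hV, pow_add]; ring
  have N16 : Near (2 * (8 * V)) := by
    convert H _ (polar_pow (e := d + 4) hd4) using 1
    push_cast; rw [hV, pow_add]; ring
  obtain ⟨i, hi⟩ := N8
  have hi8 : |8 * V - i| ≤ 1 / 8 := by
    apply half_of_near hi
    convert near_shift (-(2 * i)) N16 using 1
    push_cast; ring
  have hi8' := abs_le.1 hi8
  have i1 : (0 : ℝ) < i := by linarith
  have i2 : (i : ℝ) < 3 := by linarith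
  have hi12 : i = 1 ∨ i = 2 := by
    norm_cast at i1 i2; omega
  have e8 : (2 : ℝ) ^ (d + 3) * r = 8 * V := by rw [hV, pow_add]; ring
  rcases eq_or_ne (8 * V - i) 0 with hz | hz
  · rcases hi12 with rfl | rfl
    · refine ⟨d + 2, hd2, ?_⟩
      apply eq_inv_of_mul_eq_one_left
      rw [mul_comm, e8]
      push_cast at hz; linarith
    · refine ⟨d + 1, hd1, ?_⟩
      apply eq_inv_of_mul_eq_one_left
      rw [pow_succ, pow_succ]
      push_cast at hz; linarith
  exfalso
  set t := |8 * V - i| with ht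
  have tpos : 0 < t := abs_pos.2 hz
  have hsign : 8 * V = i + t ∨ 8 * V = i - t := by
    rcases abs_choice (8 * V - i) with h | h
    · left; rw [ht, h]; ring
    · right; rw [ht, h]; ring
  obtain ⟨f, hf, hf', hmS, hfr⟩ := exists_mem_of_near H (d + 3) t i tpos (by linarith)
    (by rwa [e8])
  have f1 : 1 ≤ f := by
    rcases Nat.eq_zero_or_pos f with rfl | h
    · rw [pow_zero] at hf; linarith
    · exact h
  obtain ⟨s1, s2⟩ := isolated _ hmS (by omega)
  have he : d + 3 + f ∉ S := s1
  have hw := hfr he s2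
  have hee : (2 : ℝ) ^ (d + 3 + f) * r = 2 ^ f * (8 * V) := by rw [← e8, pow_add]; ring
  -- in the first case `8 V ≤ 2` excludes `i = 2`
  rcases hsign with hs | hs
  · have hi1 : i = 1 := by
      rcases hi12 with h | h
      · exact h
      · subst h; push_cast at hs; linarith
    subst hi1
    push_cast at hs
    have h := near_shift (-2 ^ f) (H _ (polar_seven hd hd3 hd4 he s2 (by omega)))
    refine not_near (-1) ?_ ?_ h <;> push_cast <;> rw [sub_mul, hee, hs, mul_assoc, ← hV] <;>
      ring_nf at hw ⊢ <;> linarith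
  · have h := near_shift (2 ^ f * i) (H _ (polar_diff hd hd3 hd4 he s2 (by omega)))
    have i3 : (1 : ℝ) ≤ i := by exact_mod_cast i1
    refine not_near 0 ?_ ?_ h <;> push_cast <;> rw [sub_mul, hee, ← hV, hs] <;>
      ring_nf at hw ⊢ <;> linarith

/-! ### The set and its hull -/

/-- The set `K_{a,2}`. -/
def KSet (a : ℕ → ℕ) : Set Circle1 :=
  {0} ∪ {x : Circle1 | ∃ n : ℕ,
        x = circleProj (((2 : ℝ) ^ (a n + 1))⁻¹) ∨
        x = -circleProj (((2 : ℝ) ^ (a n + 1))⁻¹)}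

lemma subset_hull (E : Set Circle1) : E ⊆ qcHull E := fun x hx _ hχ => hχ.2 x hx

lemma near_of_hull {a : ℕ → ℕ} {r : ℝ} (h : circleProj r ∈ qcHull (KSet a)) (k : ℤ)
    (hk : InPolar (Set.range a) k) : Near (k * r) := by
  have hz : ∀ s : ℝ, k • circleProj s = circleProj (k * s) := by
    intro s
    unfold circleProj
    rw [← AddCircle.coe_zsmul, zsmul_eq_mul]
  have h' := h (zsmulAddGroupHom k : Circle1 →+ Circle1) ⟨continuous_zsmul k, ?_⟩
  · rw [zsmulAddGroupHom_apply, hz] at h'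
    exact (proj_mem_iff _).1 h'
  · rintro x (rfl | ⟨n, rfl | rfl⟩)
    · rw [map_zero]
      exact (proj_mem_iff 0).2 (near_of_abs (by norm_num))
    · rw [zsmulAddGroupHom_apply, hz, proj_mem_iff, ← div_eq_mul_inv]
      exact hk _ ⟨n, rfl⟩
    · rw [zsmulAddGroupHom_apply, smul_neg, hz,
        show ∀ s, -circleProj s = circleProj (-s) from fun _ => rfl, proj_mem_iff,
        ← div_eq_mul_inv]
      exact near_neg (hk _ ⟨n, rfl⟩)

lemma sufficiency (a : ℕ → ℕ) (ha : StrictMono a) (c1 : 0 < a 0)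
    (c2 : ∀ m n : ℕ, ¬ 1 < a (m + 1) - a m → ¬ 1 < a (n + 1) - a n → m = n)
    (c3 : ∀ n : ℕ, a (n + 1) - a n = 1 → 2 < a (n + 2) - a (n + 1)) :
    qcHull (KSet a) = KSet a := by
  refine Set.Subset.antisymm ?_ (subset_hull _)
  have cons : ∀ p, p ∈ Set.range a → p + 1 ∈ Set.range a →
      ∃ n, a n = p ∧ a (n + 1) = p + 1 := by
    rintro _ ⟨n, rfl⟩ ⟨m, hm⟩
    refine ⟨n, rfl, ?_⟩
    have h1 : n < m := ha.lt_iff_lt.1 (by omega)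
    have h2 := ha.monotone (show n + 1 ≤ m by omega)
    have h3 := ha (show n < n + 1 by omega)
    omega
  have C1 : 0 ∉ Set.range a := by
    rintro ⟨n, hn⟩
    have := ha.monotone (Nat.zero_le n)
    omega
  have C2 : ∀ p q, p ∈ Set.range a → p + 1 ∈ Set.range a → q ∈ Set.range a →
      q + 1 ∈ Set.range a → p = q := by
    intro p q h1 h2 h3 h4
    obtain ⟨m, hm, hm'⟩ := cons p h1 h2
    obtain ⟨n, hn, hn'⟩ := cons q h3 h4
    have := c2 m n (by omega) (by omega)
    subst this
    omega
  have C3 : ∀ p, p ∈ Set.range a → p + 1 ∈ Set.range a →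
      p + 2 ∉ Set.range a ∧ p + 3 ∉ Set.range a := by
    intro p h1 h2
    obtain ⟨m, hm, hm'⟩ := cons p h1 h2
    have := c3 m (by omega)
    have far : ∀ l, a l > p + 1 → a l > p + 3 := by
      intro l hl
      have h1 : m + 1 < l := ha.lt_iff_lt.1 (by omega)
      have h2 := ha.monotone (show m + 2 ≤ l by omega)
      omega
    constructor <;> rintro ⟨l, hl⟩ <;> have := far l (by omega) <;> omega
  intro x hx
  obtain ⟨r, rfl⟩ : ∃ r : ℝ, x = circleProj r := by
    obtain ⟨r, hr⟩ := QuotientAddGroup.mk_surjective x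
    exact ⟨r, hr.symm⟩
  have hN : Near r := by
    have h := near_of_hull hx 1 (by simpa using polar_pow C1)
    simpa using h
  obtain ⟨t, ht, htle⟩ := exists_rep ((proj_mem_iff r).2 hN)
  rw [ht] at hx ⊢
  have H := near_of_hull hx
  rw [abs_le] at htle
  rcases lt_trichotomy t 0 with h | h | h
  · obtain ⟨_, ⟨n, rfl⟩, hn⟩ := core C2 C3 C1 (r := -t) (by linarith) (by linarith)
      (fun k hk => by convert near_neg (H k hk) using 1; ring)
    right
    refine ⟨n, Or.inr ?_⟩
    rw [← hn]
    exact (neg_neg (circleProj t)).symm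
  · left
    rw [h]
    rfl
  · obtain ⟨_, ⟨n, rfl⟩, hn⟩ := core C2 C3 C1 h htle.2 H
    right
    exact ⟨n, Or.inl (by rw [← hn])⟩

/-! ### Necessity -/

/-- A real strictly between two consecutive powers `2^(-p)` and `2^(-(p-1)) ≤ 1/2` does not
represent an element of `K_{a,2}`. -/
lemma not_mem_K {a : ℕ → ℕ} {p : ℕ} {s : ℝ} (hp : 2 ≤ p) (h1 : 1 / 2 ^ p < s)
    (h2 : s < 2 / 2 ^ p) : circleProj s ∉ KSet a := by
  have hpp : (4 : ℝ) ≤ 2 ^ p := by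
    calc (4 : ℝ) = 2 ^ 2 := by norm_num
      _ ≤ 2 ^ p := pow_le_pow_right₀ (by norm_num) hp
  have s0 : 0 < s := lt_trans (by positivity) h1
  have s2 : s < 1 / 2 := lt_of_lt_of_le h2 (by
    rw [div_le_div_iff₀ (by positivity) (by norm_num)]; linarith)
  have hx : ∀ n, 0 < ((2 : ℝ) ^ (a n + 1))⁻¹ ∧ ((2 : ℝ) ^ (a n + 1))⁻¹ ≤ 1 / 2 := by
    intro n
    have := pow_small (e := 0) (q := a n + 1) 1 (by omega)
    simpa using this
  rintro (h | ⟨n, h | h⟩)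
  · obtain ⟨z, hz⟩ := (proj_eq_iff s 0).1 h
    have a1 : (0 : ℝ) < z := by linarith
    have a2 : (z : ℝ) < 1 := by linarith
    norm_cast at a1 a2
    omega
  · obtain ⟨z, hz⟩ := (proj_eq_iff _ _).1 h
    have a1 : (-1 : ℝ) < z := by linarith [hx n]
    have a2 : (z : ℝ) < 1 := by linarith [hx n]
    norm_cast at a1 a2
    have : z = 0 := by omega
    subst this
    push_cast at hz
    exact not_between h1 h2 (sub_eq_zero.1 hz)
  · obtain ⟨z, hz⟩ := (proj_eq_iff _ (-((2 : ℝ) ^ (a n + 1))⁻¹)).1 h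
    have a1 : (0 : ℝ) < z := by linarith [hx n]
    have a2 : (z : ℝ) < 1 := by linarith [hx n]
    norm_cast at a1 a2
    omega

lemma proj_add (s t : ℝ) : circleProj (s + t) = circleProj s + circleProj t := rfl

lemma proj_sub (s t : ℝ) : circleProj (s - t) = circleProj s - circleProj t := rfl

/-- For `χ` in the polar, `χ(x_n)` has a representative in `[-1/4, 1/4]`. -/
lemma char_rep {a : ℕ → ℕ} {χ : Circle1 →+ Circle1} (hχ : χ ∈ polar (KSet a)) (n : ℕ) :
    ∃ t : ℝ, χ (circleProj (((2 : ℝ) ^ (a n + 1))⁻¹)) = circleProj t ∧ |t| ≤ 1 / 4 :=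
  exists_rep (hχ.2 _ (Or.inr ⟨n, Or.inl rfl⟩))

/-- If `g_n = 1`, then any character in the polar maps `x_{n+1}` to `π([-1/8, 1/8])`. -/
lemma char_rep_gap {a : ℕ → ℕ} {χ : Circle1 →+ Circle1} (hχ : χ ∈ polar (KSet a)) {n : ℕ}
    (hn : a (n + 1) = a n + 1) :
    ∃ t : ℝ, χ (circleProj (((2 : ℝ) ^ (a (n + 1) + 1))⁻¹)) = circleProj t ∧ |t| ≤ 1 / 8 := by
  obtain ⟨t, ht, ht'⟩ := char_rep hχ (n + 1)
  refine ⟨t, ht, half_of_near ht' ?_⟩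
  have h := hχ.2 (circleProj (((2 : ℝ) ^ (a n + 1))⁻¹)) (Or.inr ⟨n, Or.inl rfl⟩)
  have e : ((2 : ℝ) ^ (a n + 1))⁻¹ =
      ((2 : ℝ) ^ (a (n + 1) + 1))⁻¹ + ((2 : ℝ) ^ (a (n + 1) + 1))⁻¹ := by
    rw [hn, pow_succ _ (a n + 1)]; field_simp; norm_num
  rw [e, proj_add, map_add, ht, ← proj_add, proj_mem_iff] at h
  rwa [two_mul]

lemma sum_not_mem {a : ℕ → ℕ} {p q : ℕ} (hp : 2 ≤ p) (hpq : p < q) :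
    circleProj (((2 : ℝ) ^ p)⁻¹ + ((2 : ℝ) ^ q)⁻¹) ∉ KSet a := by
  have hq : ((2 : ℝ) ^ q)⁻¹ < ((2 : ℝ) ^ p)⁻¹ :=
    inv_strictAnti₀ (by positivity) (pow_lt_pow_right₀ (by norm_num) hpq)
  have : 0 < ((2 : ℝ) ^ q)⁻¹ := by positivity
  refine not_mem_K hp ?_ ?_
  · rw [one_div]; linarith
  · rw [div_eq_mul_inv]; linarith

/-- Two gaps equal to `1` put `x_{m+1} + x_{n+1}` in the hull. -/
lemma two_gaps {a : ℕ → ℕ} (ha : StrictMono a) (hK : qcHull (KSet a) = KSet a) {m n : ℕ}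
    (hmn : m < n) (hm : a (m + 1) = a m + 1) (hn : a (n + 1) = a n + 1) : False := by
  have hlt := ha (show m + 1 < n + 1 by omega)
  refine sum_not_mem (a := a) (p := a (m + 1) + 1) (q := a (n + 1) + 1) (by omega) (by omega) ?_
  rw [← hK]
  intro χ hχ
  obtain ⟨s, hs, hs'⟩ := char_rep_gap hχ hm
  obtain ⟨t, ht, ht'⟩ := char_rep_gap hχ hn
  rw [proj_add, map_add, hs, ht, ← proj_add, proj_mem_iff]
  exact near_of_abs ((abs_add_le s t).trans (by linarith))

lemma necessity (a : ℕ → ℕ) (ha : StrictMono a) (hK : qcHull (KSet a) = KSet a) :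
    (0 < a 0 ∧
       (∀ m n : ℕ, ¬ 1 < a (m + 1) - a m → ¬ 1 < a (n + 1) - a n → m = n) ∧
       (∀ n : ℕ, a (n + 1) - a n = 1 → 2 < a (n + 2) - a (n + 1))) := by
  refine ⟨?_, ?_, ?_⟩
  · by_contra h0
    have h0 : a 0 = 0 := by omega
    have h1 := ha (show 0 < 1 by omega)
    have h2 := ha (show 1 < 2 by omega)
    have hsm := pow_small (e := 0) (q := a 2 + 1) 3 (by omega)
    rw [pow_zero, one_div] at hsm
    -- `x_0 = 1/2` is killed by the polar, and the index `2` guarantees `1/2 - x_2 > 1/4`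
    have hnot : circleProj (((2 : ℝ) ^ (a 0 + 1))⁻¹ - ((2 : ℝ) ^ (a 2 + 1))⁻¹) ∉ KSet a := by
      rw [h0]
      refine not_mem_K (p := 2) le_rfl ?_ ?_ <;> norm_num at hsm ⊢ <;> linarith
    apply hnot
    rw [← hK]
    intro χ hχ
    obtain ⟨s, hs, hs'⟩ := char_rep hχ 0
    obtain ⟨t, ht, ht'⟩ := char_rep hχ 2
    have hzero : circleProj (s + s) = circleProj 0 := by
      rw [proj_add, ← hs, ← map_add, ← proj_add, h0]
      have : circleProj (((2 : ℝ) ^ (0 + 1))⁻¹ + ((2 : ℝ) ^ (0 + 1))⁻¹) = 0 :=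
        (proj_eq_iff _ 0).2 ⟨1, by norm_num⟩
      rw [this, map_zero]
      rfl
    obtain ⟨z, hz⟩ := (proj_eq_iff _ _).1 hzero
    rw [abs_le] at hs'
    have a1 : (-1 : ℝ) < z := by linarith
    have a2 : (z : ℝ) < 1 := by linarith
    norm_cast at a1 a2
    have : z = 0 := by omega
    subst this
    push_cast at hz
    have s0 : s = 0 := by linarith
    subst s0
    rw [proj_sub, map_sub, hs, ht, ← proj_sub, proj_mem_iff, zero_sub]
    exact near_neg (near_of_abs ht')
  · intro m n hm hn
    have e1 := ha (show m < m + 1 by omega)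
    have e2 := ha (show n < n + 1 by omega)
    rcases lt_trichotomy m n with h | h | h
    · exact (two_gaps ha hK h (by omega) (by omega)).elim
    · exact h
    · exact (two_gaps ha hK h (by omega) (by omega)).elim
  · intro n hn
    by_contra hc
    have e1 := ha (show n < n + 1 by omega)
    have e2 := ha (show n + 1 < n + 2 by omega)
    rcases (by omega : a (n + 2) = a (n + 1) + 1 ∨ a (n + 2) = a (n + 1) + 2) with h | h
    · exact two_gaps ha hK (show n < n + 1 by omega) (by omega) h
    refine sum_not_mem (a := a) (p := a (n + 1) + 1) (q := a (n + 2) + 1) (by omega) (by omega) ?_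
    rw [← hK]
    intro χ hχ
    obtain ⟨s, hs, hs'⟩ := char_rep_gap hχ (show a (n + 1) = a n + 1 by omega)
    obtain ⟨t, ht, ht'⟩ := char_rep hχ (n + 2)
    rw [proj_add, map_add, hs, ht, ← proj_add, proj_mem_iff]
    have e : circleProj s = circleProj (t + t + t + t) := by
      simp only [proj_add]
      rw [← hs, ← ht]
      simp only [← map_add, ← proj_add]
      congr 2
      rw [h, show a (n + 1) + 2 + 1 = a (n + 1) + 1 + 1 + 1 by ring, pow_succ _ (a (n + 1) + 1 + 1),
        pow_succ _ (a (n + 1) + 1)]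
      field_simp; norm_num
    -- with `4 t ≡ s`, `|s| ≤ 1/8` and `|t| ≤ 1/4`, the value `s + t` is congruent to `5 t`
    obtain ⟨z, hz⟩ := (proj_eq_iff _ _).1 e
    rw [abs_le] at hs' ht'
    have a1 : (-2 : ℝ) < z := by linarith
    have a2 : (z : ℝ) < 2 := by linarith
    norm_cast at a1 a2
    have : z = -1 ∨ z = 0 ∨ z = 1 := by omega
    refine ⟨0, abs_le.2 ?_⟩
    rcases this with rfl | rfl | rfl <;> push_cast at hz ⊢ <;> constructor <;> linarith

/-- Theorem A: `K_{a,2}` is quasi-convex in `𝕋` iff (i) `a₀ > 0`, (ii) the gaps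
`gₙ = a_{n+1} - aₙ` satisfy `gₙ > 1` for all but possibly one index, and
(iii) if `gₙ = 1` for some `n`, then `g_{n+1} > 2`. -/
theorem stmt0 (a : ℕ → ℕ) (ha : StrictMono a) :
    IsQuasiConvex ({0} ∪ {x : Circle1 | ∃ n : ℕ,
        x = circleProj (((2 : ℝ) ^ (a n + 1))⁻¹) ∨
        x = -circleProj (((2 : ℝ) ^ (a n + 1))⁻¹)}) ↔
      (0 < a 0 ∧
       (∀ m n : ℕ, ¬ 1 < a (m + 1) - a m → ¬ 1 < a (n + 1) - a n → m = n) ∧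
       (∀ n : ℕ, a (n + 1) - a n = 1 → 2 < a (n + 2) - a (n + 1))) :=
  ⟨fun h => necessity a ha h, fun h => sufficiency a ha h.1 h.2.1 h.2.2⟩
end
end

section
/- Let $\underline{a}=\{a_n\}_{n=0}^\infty$ be an increasing sequence of non-negative integers, and put $y_n = 3^{a_n}$, viewed as an element of the group $\mathbb{J}_3$ of $3$-adic integers. The set $L_{\underline{a},3} = \{0\} \cup \{\pm y_n \mid n \in \mathbb{N}\}$ is quasi-convex in $\mathbb{J}_3$ if and only if the gaps $g_n = a_{n+1} - a_n$ satisfy $g_n > 1$ for all $n \in \mathbb{N}$. -/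
/-! The argument uses the characters `x ↦ l * x / 3 ^ k` of `ℤ₃` (`padicChar`), whose value at `x`
is `l * r / 3 ^ k mod 1` for any integer `r ≡ x mod 3 ^ k`.

If two consecutive exponents differ by `1`, say `y` and `3 * y` are both in the set, then a
character in the polar takes at `y` a value `t` with `t, 3 * t ∈ 𝕋₊`, so that `t` is within `1 / 12`
of `0` or `t = ± 1 / 4`; the latter is impossible as `ℤ₃` has no characters of even order. Hence
`2 * y` is in the hull, but it is not in the set.

Conversely suppose that the exponents are at distance at least `2` from each other, and let `x` be
in the hull. If `k` is not an exponent, `x / 3 ^ (k + 1)` and `2 * x / 3 ^ (k + 1)` are in the polar,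
and they show that the balanced ternary digit of `x` at `k` vanishes (`hull_digit_eq_zero`). If the
first two nonzero digits of `x` are `c` at `b` and `c'` at `d`, then both positions are exponents,
the digit at `d + 1` is zero, and the character `2 * c * x / 3 ^ (b + 2) + 2 * c' * x / 3 ^ (d + 2)`
is in the polar, while its value at `x` is within `2 / 81` of `4 / 9` (`hull_not_two_digits`).
So `x` has at most one nonzero digit. -/

noncomputable section

open Filter Topology

lemma coe_mem_Tplus {t : ℝ} : (t : Circle1) ∈ Tplus ↔ ∃ n : ℤ, |t - n| ≤ 1 / 4 := by
  constructor
  · rintro ⟨s, hs, hst⟩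
    have h0 : ((t - s : ℝ) : Circle1) = 0 := by
      rw [AddCircle.coe_sub, ← hst]; exact sub_self _
    obtain ⟨n, hn⟩ := AddCircle.coe_eq_zero_iff 1 |>.1 h0
    refine ⟨n, ?_⟩
    simp only [zsmul_eq_mul, mul_one] at hn
    rw [hn, abs_le]
    constructor <;> linarith [hs.1, hs.2]
  · rintro ⟨n, hn⟩
    rw [abs_le] at hn
    refine ⟨t - n, ⟨by linarith [hn.1], by linarith [hn.2]⟩, ?_⟩
    have h0 : ((n : ℝ) : Circle1) = 0 := (AddCircle.coe_eq_zero_iff 1).2 ⟨n, by simp⟩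
    rw [circleProj, AddCircle.coe_sub, h0, sub_zero]

lemma neg_mem_Tplus {t : Circle1} (ht : t ∈ Tplus) : -t ∈ Tplus := by
  obtain ⟨s, hs, rfl⟩ := ht
  refine ⟨-s, ⟨by linarith [hs.2], by linarith [hs.1]⟩, ?_⟩
  simp [circleProj]

lemma zero_mem_Tplus : (0 : Circle1) ∈ Tplus :=
  ⟨0, by norm_num, by simp [circleProj]⟩

/-- The character `x ↦ l * x / 3 ^ k mod 1` of the group of `3`-adic integers. -/
def padicChar (l : ℤ) (k : ℕ) : ℤ_[3] →+ Circle1 :=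
  (ZMod.toAddCircle (N := 3 ^ k)).comp
    ((AddMonoidHom.mulLeft (l : ZMod (3 ^ k))).comp (PadicInt.toZModPow k).toAddMonoidHom)

lemma padicChar_apply (l : ℤ) (k : ℕ) (x : ℤ_[3]) (r : ℤ) (h : (3 : ℤ_[3]) ^ k ∣ x - r) :
    padicChar l k x = ((l * r / 3 ^ k : ℝ) : Circle1) := by
  have h1 : PadicInt.toZModPow k x = (r : ZMod (3 ^ k)) := by
    have h2 : x - r ∈ RingHom.ker (PadicInt.toZModPow k : ℤ_[3] →+* ZMod (3 ^ k)) := by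
      rw [PadicInt.ker_toZModPow, Ideal.mem_span_singleton]
      exact_mod_cast h
    rw [RingHom.mem_ker, map_sub, map_intCast, sub_eq_zero] at h2
    exact h2
  have h3 : padicChar l k x = ZMod.toAddCircle ((l : ZMod (3 ^ k)) * PadicInt.toZModPow k x) := rfl
  rw [h3, h1, ← Int.cast_mul, ZMod.toAddCircle_intCast]
  push_cast
  rfl

lemma continuous_padicChar (l : ℤ) (k : ℕ) : Continuous (padicChar l k) := by
  apply continuous_of_continuousAt_zero
  rw [ContinuousAt, map_zero]
  -- the character vanishes on the neighbourhood `3 ^ k ℤ₃` of `0`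
  refine tendsto_const_nhds.congr' ?_
  have hpos : (0 : ℝ) < (3 : ℝ) ^ (-k : ℤ) := by positivity
  filter_upwards [Metric.ball_mem_nhds (0 : ℤ_[3]) hpos] with x hx
  rw [mem_ball_zero_iff] at hx
  have hx' := (PadicInt.norm_le_pow_iff_mem_span_pow x k).1 (by exact_mod_cast hx.le)
  rw [Ideal.mem_span_singleton] at hx'
  rw [padicChar_apply l k x 0 (by simpa using hx')]
  simp

/-- The set `{0} ∪ {± 3 ^ e | e ∈ A}` for a set `A` of exponents. -/
def expSet (A : Set ℕ) : Set ℤ_[3] :=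
  {0} ∪ {x | ∃ e ∈ A, x = (3 : ℤ_[3]) ^ e ∨ x = -(3 : ℤ_[3]) ^ e}

lemma padicChar_mem_polar {A : Set ℕ} {l : ℤ} {k : ℕ}
    (h : ∀ e ∈ A, ∃ n : ℤ, |(l * 3 ^ e / 3 ^ k : ℝ) - n| ≤ 1 / 4) :
    padicChar l k ∈ polar (expSet A) := by
  have key : ∀ e ∈ A, padicChar l k ((3 : ℤ_[3]) ^ e) ∈ Tplus := by
    intro e he
    rw [padicChar_apply l k _ (3 ^ e) (by simp)]
    rw [coe_mem_Tplus]
    simpa using h e he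
  refine ⟨continuous_padicChar l k, ?_⟩
  rintro x (rfl | ⟨e, he, rfl | rfl⟩)
  · rw [map_zero]; exact zero_mem_Tplus
  · exact key e he
  · rw [map_neg]; exact neg_mem_Tplus (key e he)

/-- If `x ≡ r mod 3 ^ k` is in the hull, every character `l * x / 3 ^ k` that is in the polar
has its value at `x` within `1 / 4` of an integer. -/
lemma hull_padicChar {A : Set ℕ} {x : ℤ_[3]} (hx : x ∈ qcHull (expSet A)) {l : ℤ} {k : ℕ} {r : ℤ}
    (hr : (3 : ℤ_[3]) ^ k ∣ x - r)
    (h : ∀ e ∈ A, ∃ n : ℤ, |(l * 3 ^ e / 3 ^ k : ℝ) - n| ≤ 1 / 4) :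
    ∃ n : ℤ, |(l * r / 3 ^ k : ℝ) - n| ≤ 1 / 4 := by
  have := hx _ (padicChar_mem_polar h)
  rwa [padicChar_apply l k x r hr, coe_mem_Tplus] at this

/-- If `k` is not an exponent, then `x / 3 ^ (k + 1)` and `2 * x / 3 ^ (k + 1)` are in the polar. -/
lemma small_char_bound {A : Set ℕ} {k : ℕ} (hk : k ∉ A) {l : ℤ} (hl : |(l : ℝ)| ≤ 2) :
    ∀ e ∈ A, ∃ n : ℤ, |(l * 3 ^ e / 3 ^ (k + 1) : ℝ) - n| ≤ 1 / 4 := by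
  intro e he
  rcases lt_trichotomy e k with h | h | h
  · obtain ⟨j, rfl⟩ := Nat.exists_eq_add_of_lt h
    refine ⟨0, ?_⟩
    have h1 : (1 : ℝ) ≤ 3 ^ j := one_le_pow₀ (by norm_num)
    have h2 : (l * 3 ^ e / 3 ^ (e + j + 1 + 1) : ℝ) = l / (9 * 3 ^ j) := by
      field_simp; ring
    rw [h2, Int.cast_zero, sub_zero, abs_div, abs_of_pos (by positivity : (0 : ℝ) < 9 * 3 ^ j),
      div_le_iff₀ (by positivity)]
    linarith
  · exact absurd (h ▸ he) hk
  · obtain ⟨j, rfl⟩ := Nat.exists_eq_add_of_lt h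
    refine ⟨l * 3 ^ j, ?_⟩
    have h2 : (l * 3 ^ (k + j + 1) / 3 ^ (k + 1) : ℝ) = l * 3 ^ j := by
      field_simp; ring
    rw [h2]
    simp

/-- The balanced ternary digit `c` at a position `k` that is not an exponent vanishes; here
`r` is the part of the expansion below the position `k`. -/
lemma hull_digit_eq_zero {A : Set ℕ} {x : ℤ_[3]} (hx : x ∈ qcHull (expSet A)) {k : ℕ} (hk : k ∉ A)
    {r c : ℤ} (hr : 2 * |r| < 3 ^ k) (hc : c = 0 ∨ c = 1 ∨ c = -1)
    (h : (3 : ℤ_[3]) ^ (k + 1) ∣ x - ((r + c * 3 ^ k : ℤ) : ℤ_[3])) : c = 0 := by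
  obtain ⟨n, hn⟩ := hull_padicChar (l := 1) hx h (small_char_bound hk (by norm_num))
  obtain ⟨m, hm⟩ := hull_padicChar (l := 2) hx h (small_char_bound hk (by norm_num))
  set s : ℝ := r / 3 ^ (k + 1) with hs
  have hs1 : |s| < 1 / 6 := by
    rw [hs, abs_div, abs_of_pos (by positivity : (0 : ℝ) < 3 ^ (k + 1)),
      div_lt_iff₀ (by positivity)]
    have : (2 : ℝ) * |(r : ℝ)| < 3 ^ k := by exact_mod_cast hr
    rw [pow_succ]; linarith
  have e1 : (((1 : ℤ) : ℝ) * ((r + c * 3 ^ k : ℤ) : ℝ) / 3 ^ (k + 1) : ℝ) = s + c / 3 := by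
    rw [hs]; push_cast; field_simp; ring
  have e2 : (((2 : ℤ) : ℝ) * ((r + c * 3 ^ k : ℤ) : ℝ) / 3 ^ (k + 1) : ℝ) = 2 * (s + c / 3) := by
    rw [hs]; push_cast; field_simp; ring
  rw [e1] at hn
  rw [e2] at hm
  rw [abs_lt] at hs1
  rw [abs_le] at hn hm
  -- `s + c / 3` lies between `1 / 6` and `1 / 2` in absolute value, so it can only be close to `0`
  rcases hc with rfl | rfl | rfl
  · rfl
  · exfalso
    push_cast at hn hm
    have n1 : (n : ℝ) < 1 := by linarith
    have n2 : (-1 : ℝ) < n := by linarith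
    have n0 : n = 0 := by
      have : n < 1 := by exact_mod_cast n1
      have : -1 < n := by exact_mod_cast n2
      omega
    subst n0
    push_cast at hn
    have m1 : (m : ℝ) < 1 := by linarith
    have m2 : (0 : ℝ) < m := by linarith
    have : m < 1 := by exact_mod_cast m1
    have : 0 < m := by exact_mod_cast m2
    omega
  · exfalso
    push_cast at hn hm
    have n1 : (n : ℝ) < 1 := by linarith
    have n2 : (-1 : ℝ) < n := by linarith
    have n0 : n = 0 := by
      have : n < 1 := by exact_mod_cast n1
      have : -1 < n := by exact_mod_cast n2
      omega
    subst n0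
    push_cast at hn
    have m1 : (m : ℝ) < 0 := by linarith
    have m2 : (-1 : ℝ) < m := by linarith
    have : m < 0 := by exact_mod_cast m1
    have : -1 < m := by exact_mod_cast m2
    omega

/-- An element of the hull is not congruent to `± 3 ^ b ± 3 ^ d` modulo `3 ^ (d + 2)` for two
exponents `b < d`. -/
lemma hull_not_two_digits {A : Set ℕ} (hA : ∀ p ∈ A, ∀ q ∈ A, p < q → p + 2 ≤ q) {x : ℤ_[3]}
    (hx : x ∈ qcHull (expSet A)) {b d : ℕ} (hb : b ∈ A) (hd : d ∈ A) (hbd : b < d)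
    {c c' : ℤ} (hc : c = 1 ∨ c = -1) (hc' : c' = 1 ∨ c' = -1)
    (h : (3 : ℤ_[3]) ^ (d + 2) ∣ x - ((c * 3 ^ b + c' * 3 ^ d : ℤ) : ℤ_[3])) : False := by
  obtain ⟨j, rfl⟩ := Nat.exists_eq_add_of_le (hA b hb d hd hbd)
  have hm : (1 : ℝ) ≤ 3 ^ j := one_le_pow₀ (by norm_num)
  have hcc : (c : ℝ) * c = 1 := by rcases hc with rfl | rfl <;> norm_num
  have hcc' : (c' : ℝ) * c' = 1 := by rcases hc' with rfl | rfl <;> norm_num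
  have habs : |(c : ℝ)| = 1 := by rcases hc with rfl | rfl <;> norm_num
  have habs' : |(c' : ℝ)| = 1 := by rcases hc' with rfl | rfl <;> norm_num
  -- the character is `2 * c * x / 3 ^ (b + 2) + 2 * c' * x / 3 ^ (d + 2)` with `d = b + 2 + j`
  obtain ⟨n, hn⟩ := hull_padicChar (l := 2 * c * 3 ^ (2 + j) + 2 * c') hx h (by
    intro e he
    rcases le_or_gt e b with hle | hlt
    · obtain ⟨i, rfl⟩ := Nat.exists_eq_add_of_le hle
      have hi : (1 : ℝ) ≤ 3 ^ i := one_le_pow₀ (by norm_num)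
      have hi2 : (1 : ℝ) ≤ 3 ^ i * 3 ^ j := by nlinarith
      refine ⟨0, ?_⟩
      have e1 : (((2 * c * 3 ^ (2 + j) + 2 * c' : ℤ) : ℝ) * 3 ^ e / 3 ^ (e + i + 2 + j + 2) : ℝ)
          = c * (2 / (9 * 3 ^ i)) + c' * (2 / (81 * (3 ^ i * 3 ^ j))) := by
        push_cast; field_simp; ring
      rw [e1, Int.cast_zero, sub_zero]
      refine (abs_add_le _ _).trans ?_
      rw [abs_mul, abs_mul, habs, habs', abs_of_pos (by positivity), abs_of_pos (by positivity)]
      have b1 : (2 / (9 * 3 ^ i) : ℝ) ≤ 2 / 9 := by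
        rw [div_le_div_iff₀ (by positivity) (by positivity)]; linarith
      have b2 : (2 / (81 * (3 ^ i * 3 ^ j)) : ℝ) ≤ 2 / 81 := by
        rw [div_le_div_iff₀ (by positivity) (by positivity)]; linarith
      linarith
    · obtain ⟨i, rfl⟩ := Nat.exists_eq_add_of_le (hA b hb e he hlt)
      rcases le_or_gt (b + 2 + i) (b + 2 + j) with hle | hlt'
      · obtain ⟨t, rfl⟩ := Nat.exists_eq_add_of_le (show i ≤ j by omega)
        have ht : (1 : ℝ) ≤ 3 ^ t := one_le_pow₀ (by norm_num)
        refine ⟨2 * c * 3 ^ i, ?_⟩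
        have e1 : (((2 * c * 3 ^ (2 + (i + t)) + 2 * c' : ℤ) : ℝ) * 3 ^ (b + 2 + i)
            / 3 ^ (b + 2 + (i + t) + 2) : ℝ) - ((2 * c * 3 ^ i : ℤ) : ℝ)
            = c' * (2 / (9 * 3 ^ t)) := by
          push_cast; field_simp; ring
        rw [e1, abs_mul, habs', abs_of_pos (by positivity), one_mul,
          div_le_iff₀ (by positivity)]
        linarith
      · obtain ⟨t, ht⟩ := Nat.exists_eq_add_of_le (hA _ hd _ he hlt')
        obtain rfl : i = j + 2 + t := by omega
        refine ⟨(2 * c * 3 ^ (2 + j) + 2 * c') * 3 ^ t, ?_⟩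
        have e1 : (((2 * c * 3 ^ (2 + j) + 2 * c' : ℤ) : ℝ) * 3 ^ (b + 2 + (j + 2 + t))
            / 3 ^ (b + 2 + j + 2) : ℝ) - (((2 * c * 3 ^ (2 + j) + 2 * c') * 3 ^ t : ℤ) : ℝ)
            = 0 := by
          push_cast; field_simp; ring
        rw [e1]; norm_num)
  have e1 : (((2 * c * 3 ^ (2 + j) + 2 * c' : ℤ) : ℝ)
      * ((c * 3 ^ b + c' * 3 ^ (b + 2 + j) : ℤ) : ℝ) / 3 ^ (b + 2 + j + 2) : ℝ)
      = 2 * (c * c) / 9 + 2 * (c' * c') / 9 + c * c' * (2 / (81 * 3 ^ j))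
        + ((2 * c * c' * 3 ^ j : ℤ) : ℝ) := by
    push_cast; field_simp; ring
  rw [e1, hcc, hcc'] at hn
  have b0 : |(c * c' * (2 / (81 * 3 ^ j)) : ℝ)| ≤ 2 / 81 := by
    rw [abs_mul, abs_mul, habs, habs', abs_of_pos (by positivity), one_mul, one_mul,
      div_le_div_iff₀ (by positivity) (by positivity)]
    linarith
  set N : ℤ := 2 * c * c' * 3 ^ j
  rw [abs_le] at hn b0
  have n1 : ((n - N : ℤ) : ℝ) < 1 := by push_cast; linarith
  have n2 : (0 : ℝ) < ((n - N : ℤ) : ℝ) := by push_cast; linarith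
  have : n - N < 1 := by exact_mod_cast n1
  have : 0 < n - N := by exact_mod_cast n2
  omega

/-- Every `3`-adic integer is congruent to a balanced digit modulo `3`. -/
lemma exists_balanced_digit (z : ℤ_[3]) :
    ∃ c : ℤ, (c = 0 ∨ c = 1 ∨ c = -1) ∧ (3 : ℤ_[3]) ∣ z - c := by
  have h := PadicInt.appr_spec 1 z
  rw [Ideal.mem_span_singleton, pow_one] at h
  obtain ⟨w, hw⟩ := h
  push_cast at hw
  set m := z.appr 1
  have hm : m % 3 = 0 ∨ m % 3 = 1 ∨ m % 3 = 2 := by omega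
  have hmd : (m : ℤ_[3]) = ((m % 3 : ℕ) : ℤ_[3]) + 3 * ((m / 3 : ℕ) : ℤ_[3]) := by
    exact_mod_cast (Nat.mod_add_div m 3).symm
  rcases hm with hm | hm | hm <;> rw [hm] at hmd
  · refine ⟨0, by simp, w + (m / 3 : ℕ), ?_⟩
    push_cast at hmd ⊢
    linear_combination hw + hmd
  · refine ⟨1, by simp, w + (m / 3 : ℕ), ?_⟩
    push_cast at hmd ⊢
    linear_combination hw + hmd
  · refine ⟨-1, by simp, w + (m / 3 : ℕ) + 1, ?_⟩
    push_cast at hmd ⊢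
    linear_combination hw + hmd

/-- Digit extraction: the balanced digit at the position `k` extends a congruence modulo `3 ^ k`
to one modulo `3 ^ (k + 1)`. -/
lemma exists_next_digit {x : ℤ_[3]} {k : ℕ} {r : ℤ} (h : (3 : ℤ_[3]) ^ k ∣ x - r) :
    ∃ c : ℤ, (c = 0 ∨ c = 1 ∨ c = -1) ∧
      (3 : ℤ_[3]) ^ (k + 1) ∣ x - ((r + c * 3 ^ k : ℤ) : ℤ_[3]) := by
  obtain ⟨z, hz⟩ := h
  obtain ⟨c, hc, w, hw⟩ := exists_balanced_digit z
  refine ⟨c, hc, w, ?_⟩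
  push_cast
  linear_combination hz + 3 ^ k * hw

/-- If the integer `r` is small and congruent to the hull element `x ≠ r` modulo `3 ^ K`, then the
next nonzero digit of `x` is at an exponent `k ≥ K`. -/
lemma exists_next_nonzero_digit {A : Set ℕ} {x : ℤ_[3]} (hx : x ∈ qcHull (expSet A)) {r : ℤ}
    {K : ℕ} (hK : 2 * |r| < 3 ^ K) (hr : (3 : ℤ_[3]) ^ K ∣ x - r) (hne : x ≠ r) :
    ∃ k ∈ A, K ≤ k ∧ ∃ c : ℤ, (c = 1 ∨ c = -1) ∧
      (3 : ℤ_[3]) ^ (k + 1) ∣ x - ((r + c * 3 ^ k : ℤ) : ℤ_[3]) := by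
  have hne' : x - r ≠ 0 := sub_ne_zero.2 hne
  have hval : ∀ n : ℕ, (3 : ℤ_[3]) ^ n ∣ x - r ↔ n ≤ (x - r).valuation := by
    intro n
    rw [← PadicInt.mem_span_pow_iff_le_valuation _ hne' n, Ideal.mem_span_singleton]
    norm_cast
  set k := (x - r).valuation
  have hKk : K ≤ k := (hval K).1 hr
  obtain ⟨c, hc, hcd⟩ := exists_next_digit ((hval k).2 le_rfl)
  have hc0 : c ≠ 0 := by
    rintro rfl
    have := (hval (k + 1)).1 (by simpa using hcd)
    omega
  refine ⟨k, ?_, hKk, c, by tauto, hcd⟩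
  by_contra hkA
  exact hc0 (hull_digit_eq_zero hx hkA
    (hK.trans_le (pow_le_pow_right₀ (by norm_num) hKk)) hc hcd)

lemma isQuasiConvex_expSet {A : Set ℕ} (hA : ∀ p ∈ A, ∀ q ∈ A, p < q → p + 2 ≤ q) :
    IsQuasiConvex (expSet A) := by
  refine Set.Subset.antisymm ?_ (fun x hx χ hχ => hχ.2 x hx)
  intro x hx
  by_contra hxE
  have hx0 : x ≠ ((0 : ℤ) : ℤ_[3]) := by
    rintro rfl
    exact hxE (Or.inl (by simp))
  obtain ⟨b, hb, -, c, hc, h1⟩ := exists_next_nonzero_digit hx (K := 0) (by simp) (by simp) hx0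
  rw [zero_add] at h1
  have hx1 : x ≠ ((c * 3 ^ b : ℤ) : ℤ_[3]) := by
    rintro rfl
    refine hxE (Or.inr ⟨b, hb, ?_⟩)
    rcases hc with rfl | rfl <;> simp
  have habs : |c * 3 ^ b| = 3 ^ b := by
    rw [abs_mul, abs_of_pos (by positivity : (0 : ℤ) < 3 ^ b)]
    rcases hc with rfl | rfl <;> simp
  obtain ⟨d, hd, hbd, c', hc', h2⟩ := exists_next_nonzero_digit hx (K := b + 1) (by
    rw [habs, pow_succ]
    have : (0 : ℤ) < 3 ^ b := by positivity
    linarith) h1 hx1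
  -- the digit at `d + 1` vanishes, as `d + 1` is too close to the exponent `d`
  obtain ⟨c'', hc'', h3⟩ := exists_next_digit h2
  have hd1 : d + 1 ∉ A := fun hmem => by
    have := hA d hd (d + 1) hmem (by omega)
    omega
  have habs' : |c' * 3 ^ d| = 3 ^ d := by
    rw [abs_mul, abs_of_pos (by positivity : (0 : ℤ) < 3 ^ d)]
    rcases hc' with rfl | rfl <;> simp
  have hsmall : 2 * |c * 3 ^ b + c' * 3 ^ d| < 3 ^ (d + 1) := by
    have t1 := abs_add_le (c * 3 ^ b) (c' * 3 ^ d)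
    have t2 : (3 : ℤ) ^ (b + 1) ≤ 3 ^ d := pow_le_pow_right₀ (by norm_num) hbd
    have t3 : (0 : ℤ) < 3 ^ b := by positivity
    rw [pow_succ] at t2 ⊢
    rw [habs, habs'] at t1
    linarith
  obtain rfl := hull_digit_eq_zero hx hd1 hsmall hc'' h3
  exact hull_not_two_digits hA hx hb hd hbd hc hc' (by simpa using h3)

/-- If `k` and `k + 1` are both exponents, then `2 * 3 ^ k` is in the hull. -/
lemma two_mul_mem_hull {A : Set ℕ} {k : ℕ} (hk : k ∈ A) (hk1 : k + 1 ∈ A) :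
    2 * (3 : ℤ_[3]) ^ k ∈ qcHull (expSet A) := by
  rintro χ ⟨hcont, hχ⟩
  have h1 := hχ _ (Or.inr ⟨k, hk, Or.inl rfl⟩)
  have h3 := hχ _ (Or.inr ⟨k + 1, hk1, Or.inl rfl⟩)
  obtain ⟨t, ht, hty⟩ := h1
  have e3 : (3 : ℤ_[3]) ^ (k + 1) = (3 : ℕ) • (3 : ℤ_[3]) ^ k := by
    rw [nsmul_eq_mul, pow_succ]; push_cast; ring
  have e2 : 2 * (3 : ℤ_[3]) ^ k = (2 : ℕ) • (3 : ℤ_[3]) ^ k := by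
    rw [nsmul_eq_mul]; push_cast; ring
  have hs : χ (2 * (3 : ℤ_[3]) ^ k) = ((2 * t : ℝ) : Circle1) := by
    rw [e2, map_nsmul, ← hty, circleProj, ← AddCircle.coe_nsmul, nsmul_eq_mul]; norm_num
  rw [e3, map_nsmul, ← hty, circleProj, ← AddCircle.coe_nsmul, nsmul_eq_mul, coe_mem_Tplus] at h3
  obtain ⟨n, hn⟩ := h3
  push_cast at hn
  rw [abs_le] at hn
  have ht1 := ht.1
  have ht2 := ht.2
  have hn1 : n < 2 := by
    have : (n : ℝ) < 2 := by linarith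
    exact_mod_cast this
  have hn2 : -2 < n := by
    have : (-2 : ℝ) < n := by linarith
    exact_mod_cast this
  by_cases hn0 : n = 0
  · subst hn0
    push_cast at hn
    rw [hs, coe_mem_Tplus]
    refine ⟨0, ?_⟩
    rw [abs_le]
    push_cast
    constructor <;> linarith
  -- here `t = ± 1 / 4`, so that `χ (2 * 3 ^ k)` has order at most `2`; it equals
  -- `χ (3 ^ j * (2 * 3 ^ k))` for all `j`, hence vanishes by continuity
  have h4 : (4 * t : ℝ) = n := by
    obtain rfl | rfl : n = 1 ∨ n = -1 := by omega
    · push_cast at hn ⊢; linarith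
    · push_cast at hn ⊢; linarith
  have htwo : (2 : ℕ) • χ (2 * (3 : ℤ_[3]) ^ k) = 0 := by
    rw [hs, ← AddCircle.coe_nsmul, AddCircle.coe_eq_zero_iff]
    refine ⟨n, ?_⟩
    rw [zsmul_one, nsmul_eq_mul]; push_cast; linarith
  have hconst : ∀ j : ℕ, χ ((3 : ℤ_[3]) ^ j * (2 * (3 : ℤ_[3]) ^ k)) = χ (2 * (3 : ℤ_[3]) ^ k) := by
    intro j
    induction j with
    | zero => simp
    | succ j ih =>
      have : (3 : ℤ_[3]) ^ (j + 1) * (2 * (3 : ℤ_[3]) ^ k)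
          = (2 : ℕ) • ((3 : ℤ_[3]) ^ j * (2 * (3 : ℤ_[3]) ^ k))
            + (3 : ℤ_[3]) ^ j * (2 * (3 : ℤ_[3]) ^ k) := by
        rw [nsmul_eq_mul]; push_cast; ring
      rw [this, map_add, map_nsmul, ih, htwo, zero_add]
  have hnorm : ‖(3 : ℤ_[3])‖ < 1 := by
    have := PadicInt.norm_p (p := 3)
    push_cast at this
    rw [this]; norm_num
  have hlim : Tendsto (fun j : ℕ => χ ((3 : ℤ_[3]) ^ j * (2 * (3 : ℤ_[3]) ^ k))) atTop (𝓝 0) := by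
    have h0 : Tendsto (fun j : ℕ => (3 : ℤ_[3]) ^ j * (2 * (3 : ℤ_[3]) ^ k)) atTop (𝓝 0) := by
      simpa using (tendsto_pow_atTop_nhds_zero_of_norm_lt_one hnorm).mul_const
        (2 * (3 : ℤ_[3]) ^ k)
    have h5 := (hcont.tendsto 0).comp h0
    rwa [map_zero] at h5
  have hzero : χ (2 * (3 : ℤ_[3]) ^ k) = 0 :=
    tendsto_nhds_unique (tendsto_const_nhds.congr fun j => (hconst j).symm) hlim
  rw [hzero]
  exact zero_mem_Tplus

lemma two_mul_notMem_expSet {A : Set ℕ} (k : ℕ) : 2 * (3 : ℤ_[3]) ^ k ∉ expSet A := by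
  have hodd : ∀ e : ℕ, Odd ((3 : ℤ) ^ e) := fun e => Odd.pow (by decide)
  rintro (h | ⟨e, -, h | h⟩)
  · simp at h
  · have h' : (2 : ℤ) * 3 ^ k = 3 ^ e := by exact_mod_cast h
    obtain ⟨m, hm⟩ := hodd e
    omega
  · have h' : (2 : ℤ) * 3 ^ k = -(3 ^ e) := by
      have h2 : ((2 * 3 ^ k : ℤ) : ℤ_[3]) = ((-(3 ^ e) : ℤ) : ℤ_[3]) := by push_cast; exact h
      exact (PadicInt.intCast_eq _ _).1 h2
    obtain ⟨m, hm⟩ := hodd e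
    omega

/-- Theorem D: `L_{a,3} = {0} ∪ {± 3^{aₙ}}` is quasi-convex in the group `𝕁₃`
of 3-adic integers iff the gaps `gₙ = a_{n+1} - aₙ` satisfy `gₙ > 1` for all `n`. -/
theorem stmt3 (a : ℕ → ℕ) (ha : StrictMono a) :
    IsQuasiConvex ({0} ∪ {x : ℤ_[3] | ∃ n : ℕ,
        x = (3 : ℤ_[3]) ^ (a n) ∨ x = -((3 : ℤ_[3]) ^ (a n))}) ↔
      (∀ n : ℕ, 1 < a (n + 1) - a n) := by
  have hE : ({0} ∪ {x : ℤ_[3] | ∃ n : ℕ,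
      x = (3 : ℤ_[3]) ^ (a n) ∨ x = -((3 : ℤ_[3]) ^ (a n))}) = expSet (Set.range a) := by
    simp only [expSet, Set.exists_range_iff]
  rw [hE]
  constructor
  · intro hqc n
    by_contra hgap
    have hlt := ha (Nat.lt_succ_self n)
    have h1 : a (n + 1) = a n + 1 := by
      simp only [Nat.succ_eq_add_one] at hlt
      omega
    have hmem := two_mul_mem_hull (A := Set.range a) ⟨n, rfl⟩ ⟨n + 1, h1⟩
    rw [hqc] at hmem
    exact two_mul_notMem_expSet _ hmem
  · intro hgap
    apply isQuasiConvex_expSet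
    rintro _ ⟨n, rfl⟩ _ ⟨m, rfl⟩ hnm
    have h1 : a (n + 1) ≤ a m := ha.monotone (ha.lt_iff_lt.1 hnm)
    have h2 := hgap n
    omega
end
end

section
/- Let $\{b_n\}_{n=0}^\infty$ be an increasing sequence of natural numbers such that $b_0 > 1$ and $b_n \mid b_{n+1}$ for every $n \in \mathbb{N}$, let $S = \{0\} \cup \{\pm 1/b_n \mid n \in \mathbb{N}\} \subseteq \mathbb{R}$, and put $q_n = b_{n+1}/b_n$. If $S$ is quasi-convex in $\mathbb{R}$, then: (a) there is at most one index $n \in \mathbb{N}$ with $q_n = 2$; (b) if $q_n = 2$ for some $n \in \mathbb{N}$, then $q_{n+1} > 4$. -/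
/-!
Write `a n = 1 / b n`. Every homomorphism `χ : ℝ → 𝕋` carrying `S` into `𝕋₊` is tightly constrained
at an index with `q n = 2`: both `χ (a (n+1))` and its double lie in `𝕋₊`, so `χ (a (n+1))` has a
representative in `[-1/8, 1/8]` (`exists_eighth`). This puts extra points in the quasi-convex hull:

* if `q m = q n = 2` with `m < n`, the point `a (m+1) + a (n+1)` (two eighths add to a quarter);
* if `q n = 2` and `q (n+1) = 3`, the point `2 * a (n+2)`;
* if `q n = 2` and `q (n+1) = 4`, the point `5 * a (n+2)`.

Each of these lies strictly between two consecutive terms of the sequence `a`, so it is not in `S`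
(`not_between`), and `S` is not quasi-convex. The case `q n = q (n+1) = 2` of (b) is contained
in (a).
-/

noncomputable section

/-- The set `{0} ∪ {± 1 / b n}`. -/
def invSet (b : ℕ → ℕ) : Set ℝ :=
  {0} ∪ {x : ℝ | ∃ n : ℕ, x = 1 / (b n : ℝ) ∨ x = -(1 / (b n : ℝ))}

lemma coe_eq_coe_iff (r s : ℝ) : (r : Circle1) = (s : Circle1) ↔ ∃ k : ℤ, r = s + k := by
  rw [← sub_eq_zero, ← AddCircle.coe_sub, AddCircle.coe_eq_zero_iff]
  constructor
  · rintro ⟨k, hk⟩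
    exact ⟨k, by simp at hk; linarith⟩
  · rintro ⟨k, hk⟩
    exact ⟨k, by simp; linarith⟩

/-- An element of `𝕋₊` whose double is in `𝕋₊` has a representative in `[-1/8, 1/8]`. -/
lemma exists_eighth {u : Circle1} (hu : u ∈ Tplus) (hu2 : u + u ∈ Tplus) :
    ∃ r : ℝ, -(1/8) ≤ r ∧ r ≤ 1/8 ∧ (r : Circle1) = u := by
  obtain ⟨r, ⟨hr1, hr2⟩, rfl⟩ := hu
  obtain ⟨s, ⟨hs1, hs2⟩, hs⟩ := hu2
  unfold circleProj at *
  rw [← AddCircle.coe_add, coe_eq_coe_iff] at hs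
  obtain ⟨k, hk⟩ := hs
  have h1 : (k : ℝ) < 1 := by linarith
  have h2 : (-1 : ℝ) < k := by linarith
  have h1' : k < 1 := by exact_mod_cast h1
  have h2' : -1 < k := by exact_mod_cast h2
  obtain rfl : k = 0 := by lia
  push_cast at hk
  exact ⟨r, by linarith, by linarith, rfl⟩

lemma mem_Tplus_of_coe_eq {u : Circle1} {r : ℝ} (h1 : -(1/4) ≤ r) (h2 : r ≤ 1/4)
    (h : (r : Circle1) = u) : u ∈ Tplus :=
  ⟨r, ⟨h1, h2⟩, h⟩

lemma two_mul_mem_Tplus {y : Circle1} (hy : y ∈ Tplus) {s : ℝ} (hs1 : -(1/8) ≤ s) (hs2 : s ≤ 1/8)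
    (hs : (s : Circle1) = 3 • y) : 2 • y ∈ Tplus := by
  obtain ⟨r, ⟨hr1, hr2⟩, rfl⟩ := hy
  unfold circleProj at *
  rw [← AddCircle.coe_nsmul, coe_eq_coe_iff] at hs
  obtain ⟨k, hk⟩ := hs
  simp only [nsmul_eq_mul, Nat.cast_ofNat] at hk
  have h1 : (k : ℝ) < 1 := by linarith
  have h2 : (-1 : ℝ) < k := by linarith
  have h1' : k < 1 := by exact_mod_cast h1
  have h2' : -1 < k := by exact_mod_cast h2
  obtain rfl : k = 0 := by lia
  push_cast at hk
  refine mem_Tplus_of_coe_eq (r := 2 * r) (by linarith) (by linarith) ?_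
  rw [← AddCircle.coe_nsmul]
  simp

/-- Besides being close to `0`, `y` may be close to `± 1/4`. Multiplication by `5` maps both kinds
of solutions into `𝕋₊`: `5 y` is represented by `s + r` for representatives `s` of `4 y` and `r` of
`y`, and in the second case `s * r ≤ 0`. -/
lemma five_mul_mem_Tplus {y : Circle1} (hy : y ∈ Tplus) {s : ℝ} (hs1 : -(1/8) ≤ s) (hs2 : s ≤ 1/8)
    (hs : (s : Circle1) = 4 • y) : 5 • y ∈ Tplus := by
  obtain ⟨r, ⟨hr1, hr2⟩, rfl⟩ := hy
  unfold circleProj at *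
  have hs' := hs
  rw [← AddCircle.coe_nsmul, coe_eq_coe_iff] at hs
  obtain ⟨k, hk⟩ := hs
  simp only [nsmul_eq_mul, Nat.cast_ofNat] at hk
  have h1 : (k : ℝ) < 2 := by linarith
  have h2 : (-2 : ℝ) < k := by linarith
  have h1' : k < 2 := by exact_mod_cast h1
  have h2' : -2 < k := by exact_mod_cast h2
  have hk3 : k = -1 ∨ k = 0 ∨ k = 1 := by lia
  have key : -(1/4) ≤ s + r ∧ s + r ≤ 1/4 := by
    rcases hk3 with rfl | rfl | rfl <;> push_cast at hk <;> constructor <;> linarith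
  refine mem_Tplus_of_coe_eq key.1 key.2 ?_
  rw [AddCircle.coe_add, hs', ← succ_nsmul]

lemma mem_of_forall_hom {S : Set ℝ} (hqc : IsQuasiConvex S) {x : ℝ}
    (h : ∀ χ : ℝ →+ Circle1, (∀ s ∈ S, χ s ∈ Tplus) → χ x ∈ Tplus) : x ∈ S := by
  rw [← hqc]
  exact fun χ hχ => h χ hχ.2

/-- No point strictly between two consecutive terms `1 / b (k+1)` and `1 / b k` lies in the set. -/
lemma not_between_s4 {b : ℕ → ℕ} (hb : StrictMono b) (hb0 : 1 < b 0) {k : ℕ} {x : ℝ}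
    (h1 : 1 / (b (k + 1) : ℝ) < x) (h2 : x < 1 / (b k : ℝ)) : x ∉ invSet b := by
  have hpos : ∀ n, (0 : ℝ) < b n := fun n => by
    have := hb.monotone (Nat.zero_le n)
    exact_mod_cast (by lia : 0 < b n)
  have hx : 0 < x := (one_div_pos.2 (hpos _)).trans h1
  rintro (h | ⟨m, rfl | h⟩)
  · exact hx.ne' h
  · rw [one_div_lt_one_div (hpos _) (hpos _), Nat.cast_lt, hb.lt_iff_lt] at h1 h2
    lia
  · have := one_div_pos.2 (hpos m)
    linarith

lemma one_div_mem (b : ℕ → ℕ) (n : ℕ) : 1 / (b n : ℝ) ∈ invSet b :=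
  Or.inr ⟨n, Or.inl rfl⟩

lemma one_div_eq_mul {b : ℕ → ℕ} (hb : StrictMono b) (hb0 : 1 < b 0)
    (hdvd : ∀ n : ℕ, b n ∣ b (n + 1)) {n q : ℕ} (hq : b (n + 1) / b n = q) :
    1 / (b n : ℝ) = q * (1 / (b (n + 1) : ℝ)) := by
  have hpos : ∀ n, (b n : ℝ) ≠ 0 := fun n => by
    have := hb.monotone (Nat.zero_le n)
    exact_mod_cast (by lia : b n ≠ 0)
  have h : b (n + 1) = b n * q := by rw [← hq, Nat.mul_div_cancel' (hdvd n)]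
  have h' : (b (n + 1) : ℝ) = b n * q := by exact_mod_cast h
  have h1 := hpos n
  have h2 := hpos (n + 1)
  field_simp
  linarith

/-- At an index with ratio `2`, a homomorphism mapping the set into `𝕋₊` takes `1 / b (n+1)` into
the image of `[-1/8, 1/8]`. -/
lemma exists_eighth_of_ratio_two {b : ℕ → ℕ} (hb : StrictMono b) (hb0 : 1 < b 0)
    (hdvd : ∀ n : ℕ, b n ∣ b (n + 1)) {n : ℕ} (hq : b (n + 1) / b n = 2) {χ : ℝ →+ Circle1}
    (hχ : ∀ s ∈ invSet b, χ s ∈ Tplus) :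
    ∃ r : ℝ, -(1/8) ≤ r ∧ r ≤ 1/8 ∧ (r : Circle1) = χ (1 / (b (n + 1) : ℝ)) := by
  refine exists_eighth (hχ _ (one_div_mem b _)) ?_
  have h := hχ _ (one_div_mem b n)
  rwa [one_div_eq_mul hb hb0 hdvd hq, Nat.cast_ofNat, two_mul, map_add] at h

lemma ratio_two_not_lt {b : ℕ → ℕ} (hb : StrictMono b) (hb0 : 1 < b 0)
    (hdvd : ∀ n : ℕ, b n ∣ b (n + 1)) (hqc : IsQuasiConvex (invSet b)) {m n : ℕ}
    (hm : b (m + 1) / b m = 2) (hn : b (n + 1) / b n = 2) : ¬ m < n := by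
  intro hmn
  have hpos : ∀ n, (0 : ℝ) < b n := fun n => by
    have := hb.monotone (Nat.zero_le n)
    exact_mod_cast (by lia : 0 < b n)
  have hlt : 1 / (b (n + 1) : ℝ) < 1 / (b (m + 1) : ℝ) := by
    rw [one_div_lt_one_div (hpos _) (hpos _), Nat.cast_lt, hb.lt_iff_lt]
    lia
  have hm' := one_div_eq_mul hb hb0 hdvd hm
  have hp := one_div_pos.2 (hpos (n + 1))
  push_cast at hm'
  refine not_between_s4 hb hb0 (k := m) (x := 1 / (b (m + 1) : ℝ) + 1 / (b (n + 1) : ℝ))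
    (by linarith) (by linarith) (mem_of_forall_hom hqc fun χ hχ => ?_)
  obtain ⟨r, hr1, hr2, hr⟩ := exists_eighth_of_ratio_two hb hb0 hdvd hm hχ
  obtain ⟨s, hs1, hs2, hs⟩ := exists_eighth_of_ratio_two hb hb0 hdvd hn hχ
  refine mem_Tplus_of_coe_eq (r := r + s) (by linarith) (by linarith) ?_
  rw [AddCircle.coe_add, hr, hs, map_add]

/-- If `S = {0} ∪ {± 1/bₙ}` is quasi-convex in `ℝ`, where `bₙ ∣ b_{n+1}` and
`qₙ = b_{n+1}/bₙ`, then (a) at most one index `n` has `qₙ = 2`, and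
(b) if `qₙ = 2`, then `q_{n+1} > 4`. -/
theorem stmt4 (b : ℕ → ℕ) (hb : StrictMono b) (hb0 : 1 < b 0)
    (hdvd : ∀ n : ℕ, b n ∣ b (n + 1))
    (hqc : IsQuasiConvex ({0} ∪ {x : ℝ | ∃ n : ℕ,
        x = 1 / (b n : ℝ) ∨ x = -(1 / (b n : ℝ))})) :
    (∀ m n : ℕ, b (m + 1) / b m = 2 → b (n + 1) / b n = 2 → m = n) ∧
    (∀ n : ℕ, b (n + 1) / b n = 2 → 4 < b (n + 2) / b (n + 1)) := by
  have hqc' : IsQuasiConvex (invSet b) := hqc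
  have hpos : ∀ n, (0 : ℝ) < b n := fun n => by
    have := hb.monotone (Nat.zero_le n)
    exact_mod_cast (by lia : 0 < b n)
  refine ⟨fun m n hm hn => ?_, fun n hn => ?_⟩
  · have h1 := ratio_two_not_lt hb hb0 hdvd hqc' hm hn
    have h2 := ratio_two_not_lt hb hb0 hdvd hqc' hn hm
    lia
  · by_contra! hle
    have hn' := one_div_eq_mul hb hb0 hdvd hn
    have hp := one_div_pos.2 (hpos (n + 2))
    obtain ⟨q, hq⟩ : ∃ q, b (n + 1 + 1) / b (n + 1) = q := ⟨_, rfl⟩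
    have hmul : b (n + 1 + 1) = b (n + 1) * q := by rw [← hq, Nat.mul_div_cancel' (hdvd _)]
    have hlt : b (n + 1) < b (n + 1 + 1) := hb (Nat.lt_succ_self _)
    have hq' : q ≤ 4 := hq ▸ hle
    have hq1 := one_div_eq_mul hb hb0 hdvd hq
    interval_cases q
    · lia
    · lia
    · exact ratio_two_not_lt hb hb0 hdvd hqc' hn hq n.lt_succ_self
    · push_cast at hq1 hn'
      refine not_between_s4 hb hb0 (k := n + 1) (x := 2 • (1 / (b (n + 2) : ℝ))) ?_ ?_
        (mem_of_forall_hom hqc' fun χ hχ => ?_)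
      · rw [nsmul_eq_mul]; push_cast; linarith
      · rw [nsmul_eq_mul]; push_cast; linarith
      · obtain ⟨s, hs1, hs2, hs⟩ := exists_eighth_of_ratio_two hb hb0 hdvd hn hχ
        rw [map_nsmul]
        refine two_mul_mem_Tplus (hχ _ (one_div_mem b _)) hs1 hs2 ?_
        rw [hs, hq1, ← map_nsmul, nsmul_eq_mul, Nat.cast_ofNat]
    · push_cast at hq1 hn'
      refine not_between_s4 hb hb0 (k := n) (x := 5 • (1 / (b (n + 2) : ℝ))) ?_ ?_
        (mem_of_forall_hom hqc' fun χ hχ => ?_)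
      · rw [nsmul_eq_mul]; push_cast; linarith
      · rw [nsmul_eq_mul]; push_cast; linarith
      · obtain ⟨s, hs1, hs2, hs⟩ := exists_eighth_of_ratio_two hb hb0 hdvd hn hχ
        rw [map_nsmul]
        refine five_mul_mem_Tplus (hχ _ (one_div_mem b _)) hs1 hs2 ?_
        rw [hs, hq1, ← map_nsmul, nsmul_eq_mul, Nat.cast_ofNat]
end
end

section
/- Let $G$ be an abelian topological group and $h_1, h_2 \in G$. Then $h_1 + h_2 \in Q_G(\{h_1, 2h_1, h_2, 2h_2\})$ and $h_1 - h_2 \in Q_G(\{h_1, 2h_1, h_2, 2h_2\})$. -/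
/-!
If `c` and `2 • c` both lie in `𝕋₊`, then `c` has a real representative in `[-1/8, 1/8]`
(`exists_small_rep`): for a representative `a ∈ [-1/4, 1/4]` of `c`, the number `2a` differs by an
integer from some `b ∈ [-1/4, 1/4]`, and `|2a - b| ≤ 3/4 < 1` forces `2a = b`. So for a character
`χ` in the polar, `χ h₁` and `χ h₂` both have representatives in `[-1/8, 1/8]`, and the sum and
difference of these representatives lie in `[-1/4, 1/4]`.
-/

noncomputable section

theorem exists_small_rep {c : Circle1} (h : c ∈ Tplus) (h' : 2 • c ∈ Tplus) :
    ∃ a : ℝ, |a| ≤ 1 / 8 ∧ circleProj a = c := by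
  obtain ⟨a, ⟨ha₁, ha₂⟩, rfl⟩ := h
  obtain ⟨b, ⟨hb₁, hb₂⟩, hb⟩ := h'
  have hab : ((b - 2 * a : ℝ) : Circle1) = 0 := by
    rw [AddCircle.coe_sub, sub_eq_zero, two_mul, AddCircle.coe_add, ← two_nsmul]
    exact hb
  obtain ⟨n, hn⟩ := (AddCircle.coe_eq_zero_iff (1 : ℝ)).1 hab
  rw [zsmul_eq_mul, mul_one] at hn
  have h₁ : (n : ℝ) < 1 := by linarith
  have h₂ : (-1 : ℝ) < n := by linarith
  have hn₀ : n = 0 := by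
    have : n < 1 := by exact_mod_cast h₁
    have : -1 < n := by exact_mod_cast h₂
    omega
  rw [hn₀, Int.cast_zero] at hn
  exact ⟨a, abs_le.2 ⟨by linarith, by linarith⟩, rfl⟩

/-- In any abelian topological group, `h₁ ± h₂ ∈ Q_G({h₁, 2h₁, h₂, 2h₂})`. -/
theorem stmt5 {G : Type} [AddCommGroup G] [TopologicalSpace G] (h₁ h₂ : G) :
    h₁ + h₂ ∈ qcHull ({h₁, 2 • h₁, h₂, 2 • h₂} : Set G) ∧
    h₁ - h₂ ∈ qcHull ({h₁, 2 • h₁, h₂, 2 • h₂} : Set G) := by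
  have key : ∀ χ ∈ polar ({h₁, 2 • h₁, h₂, 2 • h₂} : Set G),
      χ (h₁ + h₂) ∈ Tplus ∧ χ (h₁ - h₂) ∈ Tplus := by
    rintro χ ⟨-, hχ⟩
    obtain ⟨a, ha, haχ⟩ := exists_small_rep (hχ h₁ (by simp))
      (by rw [← map_nsmul]; exact hχ _ (by simp))
    obtain ⟨b, hb, hbχ⟩ := exists_small_rep (hχ h₂ (by simp))
      (by rw [← map_nsmul]; exact hχ _ (by simp))
    rw [abs_le] at ha hb
    rw [map_add, map_sub, ← haχ, ← hbχ]
    exact ⟨⟨a + b, ⟨by linarith, by linarith⟩, AddCircle.coe_add _ _ _⟩,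
      ⟨a - b, ⟨by linarith, by linarith⟩, AddCircle.coe_sub _ _ _⟩⟩
  exact ⟨fun χ hχ => (key χ hχ).1, fun χ hχ => (key χ hχ).2⟩
end
end

section
/- Let $G$ be an abelian topological group and $h \in G$. Then $4h \in Q_G(\{h, 3h, 6h\})$. -/
/-! Lift `χ h` to a real `t` with `|t| ≤ 1/4`, and choose integers `m`, `k` such that
`|3t + m| ≤ 1/4` and `|6t + k| ≤ 1/4`. Doubling the first bound gives `|k - 2m| ≤ 3/4`, so `k = 2m`
and `|3t + m| ≤ 1/8`. As `|3t| ≤ 3/4`, this forces `m = 0`, hence `|t| ≤ 1/24` and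
`|4t| ≤ 1/6 < 1/4`. -/

noncomputable section

/-- If `n • π(t)` lies in `𝕋₊`, then `n * t` is within `1/4` of the integer `-m`. -/
lemma exists_int_of_nsmul_mem_Tplus {t : ℝ} {n : ℕ} (ht : n • (t : Circle1) ∈ Tplus) :
    ∃ m : ℤ, -(1/4) ≤ n * t + m ∧ n * t + m ≤ 1/4 := by
  obtain ⟨s, ⟨hs1, hs2⟩, hs⟩ := ht
  have h0 : ((s - n * t : ℝ) : Circle1) = 0 := by
    have e : ((n * t : ℝ) : Circle1) = n • (t : Circle1) := by
      rw [← nsmul_eq_mul, AddCircle.coe_nsmul]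
    rw [AddCircle.coe_sub, e, ← hs, circleProj, sub_self]
  obtain ⟨m, hm⟩ := (AddCircle.coe_eq_zero_iff (1 : ℝ)).1 h0
  rw [zsmul_eq_mul, mul_one] at hm
  exact ⟨m, by linarith, by linarith⟩

/-- In any abelian topological group, `4h ∈ Q_G({h, 3h, 6h})`. -/
theorem stmt6 {G : Type} [AddCommGroup G] [TopologicalSpace G] (h : G) :
    4 • h ∈ qcHull ({h, 3 • h, 6 • h} : Set G) := by
  rintro χ ⟨-, hχ⟩
  obtain ⟨t, ⟨ht1, ht2⟩, ht⟩ := hχ h (by simp)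
  have h3 := hχ (3 • h) (by simp)
  have h6 := hχ (6 • h) (by simp)
  rw [map_nsmul, ← ht] at h3 h6
  rw [map_nsmul, ← ht]
  obtain ⟨m, hm1, hm2⟩ := exists_int_of_nsmul_mem_Tplus h3
  obtain ⟨k, hk1, hk2⟩ := exists_int_of_nsmul_mem_Tplus h6
  push_cast at hm1 hm2 hk1 hk2
  have hm3 : m ≤ 1 := by
    have : (m : ℝ) < 2 := by linarith
    have : m < 2 := by exact_mod_cast this
    omega
  have hm4 : -1 ≤ m := by
    have : (-2 : ℝ) < m := by linarith
    have : -2 < m := by exact_mod_cast this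
    omega
  have key : -(1/24) ≤ t ∧ t ≤ 1/24 := by
    -- The integer `k - 2 * m` lies strictly between `-1` and `1`, as `|6t + 2m| ≤ 1/2`.
    have hk3 : k = 2 * m := by
      have a : (k : ℝ) - 2 * m < 1 := by linarith
      have b : (-1 : ℝ) < k - 2 * m := by linarith
      have a' : k - 2 * m < 1 := by exact_mod_cast a
      have b' : -1 < k - 2 * m := by exact_mod_cast b
      omega
    subst hk3
    push_cast at hk1 hk2
    -- Now `|3t + m| ≤ 1/8`, which for `m = ±1` would force `|t| > 1/4`.
    interval_cases m <;> norm_num at hk1 hk2 <;> constructor <;> linarith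
  refine ⟨4 * t, ⟨by linarith [key.1], by linarith [key.2]⟩, ?_⟩
  rw [circleProj, circleProj, ← AddCircle.coe_nsmul, nsmul_eq_mul]
  norm_num
end
end

section
/- Let $G$ be an abelian topological group and $h \in G$. Then $5h \in Q_G(\{h, 4h, 8h\})$. -/
/-!
Fix a character `χ` in the polar and a representative `t ∈ [-1/4, 1/4]` of `χ h`. Since `4t` and its
double `8t` both lie in `𝕋₊`, the number `4t` is within `1/8` of an integer, so `t` is within `1/32`
of `0`, or of `±1/4`. In the first case `|5t| ≤ 5/32`. In the second case `|t| ≤ 1/4` leaves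
`±t ∈ [7/32, 1/4]`, so `±5t ∈ [1 + 3/32, 1 + 1/4]`. In both cases `5t` is within `1/4` of the integer
nearest to `4t`.
-/

noncomputable section

/-- Membership in `𝕋₊`, read off on a real representative: it lies within `1/4` of an integer. -/
theorem coe_mem_Tplus_iff (t : ℝ) :
    (t : Circle1) ∈ Tplus ↔ ∃ k : ℤ, -(1/4) ≤ t - k ∧ t - k ≤ 1/4 := by
  have key (r : ℝ) : (r : Circle1) = t ↔ ∃ k : ℤ, (k : ℝ) = t - r := by
    rw [QuotientAddGroup.eq, AddSubgroup.mem_zmultiples_iff]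
    simp [neg_add_eq_sub]
  constructor
  · rintro ⟨r, ⟨h1, h2⟩, hr⟩
    obtain ⟨k, hk⟩ := (key r).1 hr
    exact ⟨k, by linarith, by linarith⟩
  · rintro ⟨k, h1, h2⟩
    exact ⟨t - k, ⟨h1, h2⟩, (key _).2 ⟨k, by ring⟩⟩

/-- In any abelian topological group, `5h ∈ Q_G({h, 4h, 8h})`. -/
theorem stmt7 {G : Type} [AddCommGroup G] [TopologicalSpace G] (h : G) :
    5 • h ∈ qcHull ({h, 4 • h, 8 • h} : Set G) := by
  rintro χ ⟨-, hχ⟩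
  have h1 := hχ h (by simp)
  have h4 := hχ (4 • h) (by simp)
  have h8 := hχ (8 • h) (by simp)
  obtain ⟨t, ⟨ht1, ht2⟩, ht⟩ := h1
  have hmul (n : ℕ) : χ (n • h) = ((n * t : ℝ) : Circle1) := by
    rw [map_nsmul, ← ht, circleProj, ← AddCircle.coe_nsmul, nsmul_eq_mul]
  rw [hmul, coe_mem_Tplus_iff] at h4 h8 ⊢
  push_cast at h4 h8 ⊢
  obtain ⟨m, hm1, hm2⟩ := h4
  obtain ⟨n, hn1, hn2⟩ := h8
  -- The integer nearest to `4t` also works for `5t`.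
  refine ⟨m, ?_⟩
  have hm_lo : -2 < m := by exact_mod_cast (by linarith : (-2 : ℝ) < m)
  have hm_hi : m < 2 := by exact_mod_cast (by linarith : (m : ℝ) < 2)
  -- As `|8t - 2m| ≤ 1/2`, the integers `n` and `2m` differ by less than `1`.
  have hn_lo : 2 * m - 1 < n := by exact_mod_cast (by linarith : (2 * m - 1 : ℝ) < n)
  have hn_hi : n < 2 * m + 1 := by exact_mod_cast (by linarith : (n : ℝ) < 2 * m + 1)
  obtain rfl : n = 2 * m := by lia
  push_cast at hn1 hn2
  interval_cases m <;> norm_num at * <;> constructor <;> linarith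
end
end

section
/- Let $Y \subseteq (-1/2, 1/2)$ be a compact subset of $\mathbb{R}$. If the projection $\pi(Y)$ is quasi-convex in $\mathbb{T}$, then $Y$ is quasi-convex in $\mathbb{R}$. -/
/-!
Let `x` lie in the quasi-convex hull of `Y` in `ℝ`. Every character of `𝕋` in the polar of `π(Y)`
pulls back along `π` to a character in the polar of `Y`, so `π(x)` lies in the hull of `π(Y)`, which
is `π(Y)` by hypothesis; hence `x = y + n` with `y ∈ Y` and `n ∈ ℤ`. By compactness
`Y ⊆ [-M, M]` for some `M < 1/2`, and a suitable scaling character `u ↦ π(s u)` shows `|x| < 1/2`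
(`abs_lt_half_of_mem_qcHull`). As `|y| < 1/2` too, `n = 0` and `x = y ∈ Y`.
-/


noncomputable section

/-- The character `u ↦ π(s u)` of `ℝ`. -/
def scaleChar (s : ℝ) : ℝ →+ Circle1 :=
  (QuotientAddGroup.mk' (AddSubgroup.zmultiples (1 : ℝ))).comp (AddMonoidHom.mulLeft s)

theorem scaleChar_apply (s u : ℝ) : scaleChar s u = circleProj (s * u) := rfl

theorem continuous_scaleChar (s : ℝ) : Continuous (scaleChar s) :=
  (AddCircle.continuous_mk' (1 : ℝ)).comp (continuous_const.mul continuous_id)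

theorem circleProj_eq_iff (a b : ℝ) :
    circleProj a = circleProj b ↔ ∃ n : ℤ, a = b + n := by
  unfold circleProj
  rw [eq_comm, QuotientAddGroup.eq, AddSubgroup.mem_zmultiples_iff]
  refine exists_congr fun n => ?_
  rw [zsmul_eq_mul, mul_one]
  constructor <;> intro h <;> linarith

theorem circleProj_notMem_Tplus {c : ℝ} (h1 : 1 / 4 < c) (h2 : c ≤ 1 / 2) :
    circleProj c ∉ Tplus := by
  rintro ⟨q, ⟨hq1, hq2⟩, hq⟩
  obtain ⟨n, hn⟩ := (circleProj_eq_iff q c).1 hq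
  have a1 : (-1 : ℝ) < n := by linarith
  have a2 : (n : ℝ) < 0 := by linarith
  have b1 : -1 < n := by exact_mod_cast a1
  have b2 : n < 0 := by exact_mod_cast a2
  omega

theorem exists_bound_lt_half {Y : Set ℝ} (hcpt : IsCompact Y)
    (hsub : Y ⊆ Set.Ioo (-(1/2) : ℝ) (1/2)) :
    ∃ M : ℝ, 1 / 4 ≤ M ∧ M < 1 / 2 ∧ ∀ y ∈ Y, |y| ≤ M := by
  rcases Y.eq_empty_or_nonempty with rfl | hne
  · exact ⟨1 / 4, le_rfl, by norm_num, by simp⟩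
  · obtain ⟨z, hz, hmax⟩ := hcpt.exists_isMaxOn hne continuous_abs.continuousOn
    exact ⟨max (1 / 4) |z|, le_max_left _ _,
      max_lt (by norm_num) (abs_lt.2 (hsub hz)),
      fun y hy => (hmax hy).trans (le_max_right _ _)⟩

/-- If `|x| ≥ 1/2`, the character scaling `x` to `c = 1 / (8 M) ∈ (1/4, 1/2]` maps `Y` into `𝕋₊`
but not `x`. -/
theorem abs_lt_half_of_mem_qcHull {Y : Set ℝ} (hcpt : IsCompact Y)
    (hsub : Y ⊆ Set.Ioo (-(1/2) : ℝ) (1/2)) {x : ℝ} (hx : x ∈ qcHull Y) : |x| < 1 / 2 := by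
  obtain ⟨M, hM1, hM2, hM⟩ := exists_bound_lt_half hcpt hsub
  by_contra! hlt
  have hM0 : 0 < M := by linarith
  have hx0 : x ≠ 0 := by
    rintro rfl
    norm_num at hlt
  have hc : 1 / 4 < 1 / (8 * M) := by
    rw [div_lt_div_iff₀ (by norm_num) (by positivity)]
    linarith
  have hc' : 1 / (8 * M) ≤ 1 / 2 := by
    rw [div_le_div_iff₀ (by positivity) (by norm_num)]
    linarith
  have hs : |1 / (8 * M) / x| ≤ 1 / (4 * M) := by
    rw [abs_div, abs_of_pos (by positivity : 0 < 1 / (8 * M)), div_le_iff₀ (abs_pos.2 hx0)]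
    calc 1 / (8 * M) = 1 / (4 * M) * (1 / 2) := by field_simp; norm_num
      _ ≤ 1 / (4 * M) * |x| := by gcongr
  have hpol : scaleChar (1 / (8 * M) / x) ∈ polar Y := by
    refine ⟨continuous_scaleChar _, fun y hy => ⟨_, abs_le.1 ?_, (scaleChar_apply _ _).symm⟩⟩
    calc |1 / (8 * M) / x * y| = |1 / (8 * M) / x| * |y| := abs_mul _ _
      _ ≤ 1 / (4 * M) * M := by gcongr; exact hM y hy
      _ = 1 / 4 := by field_simp
  have h := hx _ hpol
  rw [scaleChar_apply, div_mul_cancel₀ _ hx0] at h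
  exact circleProj_notMem_Tplus hc hc' h

theorem circleProj_mem_qcHull {Y : Set ℝ} {x : ℝ} (hx : x ∈ qcHull Y) :
    circleProj x ∈ qcHull (circleProj '' Y) := by
  rintro χ ⟨hχ, hχY⟩
  exact hx (χ.comp (QuotientAddGroup.mk' (AddSubgroup.zmultiples (1 : ℝ))))
    ⟨hχ.comp (AddCircle.continuous_mk' (1 : ℝ)), fun y hy => hχY _ ⟨y, hy, rfl⟩⟩

/-- If `Y ⊆ (-1/2, 1/2)` is compact in `ℝ` and `π(Y)` is quasi-convex in `𝕋`,
then `Y` is quasi-convex in `ℝ`. -/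
theorem stmt9 (Y : Set ℝ) (hcpt : IsCompact Y)
    (hsub : Y ⊆ Set.Ioo (-(1/2) : ℝ) (1/2))
    (hqc : IsQuasiConvex (circleProj '' Y)) :
    IsQuasiConvex Y := by
  refine Set.Subset.antisymm (fun x hx => ?_) (fun x hx χ hχ => hχ.2 x hx)
  have hπ := circleProj_mem_qcHull hx
  rw [hqc] at hπ
  obtain ⟨y, hy, hyx⟩ := hπ
  obtain ⟨n, hn⟩ := (circleProj_eq_iff y x).1 hyx
  obtain ⟨x1, x2⟩ := abs_lt.1 (abs_lt_half_of_mem_qcHull hcpt hsub hx)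
  obtain ⟨y1, y2⟩ := hsub hy
  have a1 : (-1 : ℝ) < n := by linarith
  have a2 : (n : ℝ) < 1 := by linarith
  have b1 : -1 < n := by exact_mod_cast a1
  have b2 : n < 1 := by exact_mod_cast a2
  obtain rfl : n = 0 := by omega
  have hxy : x = y := by simpa using hn.symm
  rwa [hxy]
end
end

section
/- Let $\{b_n\}_{n=0}^\infty$ be an increasing sequence of natural numbers such that $b_0 > 1$ and $b_n \mid b_{n+1}$ for every $n \in \mathbb{N}$, let $X = \{0\} \cup \{\pm \pi(1/b_n) \mid n \in \mathbb{N}\} \subseteq \mathbb{T}$, and put $q_n = b_{n+1}/b_n$. If $X$ is quasi-convex in $\mathbb{T}$, then: (a) $b_0 \geq 4$; (b) there is at most one index $n \in \mathbb{N}$ with $q_n = 2$; (c) if $q_n = 2$ for some $n \in \mathbb{N}$, then $q_{n+1} > 4$. -/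
/-!
A character `χ` of `𝕋` in the polar of `X` is controlled at `1/bₙ` by divisibility: if `χ(x)` and
`χ(2x)` lie in `𝕋₊`, then `χ(x)` lies in `π([-1/8, 1/8])` (`exists_rep_of_double`). Each
failure of (a), (b) or (c) produces a point `π(t)` of the quasi-convex hull with
`1/b_{k+1} < t < 1/b_k` for some `k`, and no such point belongs to `X` (`not_mem_of_between`).

* (a) If `b₀ ∈ {2, 3}`, then `χ(1/b₀) ∈ 𝕋₊` is annihilated by `b₀`, so it vanishes, and
  `t = 1/b₀ - 1/b₂` works.
* (b) If `q_m = q_n = 2` with `m < n`, then `t = 1/b_{m+1} + 1/b_{n+1}` works, both summands being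
  sent into `π([-1/8, 1/8])`.
* (c) Let `q_n = 2`. The case `q_{n+1} = 2` contradicts (b). If `q_{n+1} = 3`, then `t = 2/b_{n+2}`
  works, and if `q_{n+1} = 4`, then `t = 5/b_{n+2}` works. In the last case `χ(1/b_{n+2})` is within
  `1/32` of `0`, or of `±1/4` on the side of `0`; multiplication by `5` fixes these three points and
  enlarges the error to at most `5/32` on the same side, so it does not leave `𝕋₊`.

No classification of the characters of `𝕋` is needed, only additivity.
-/

noncomputable section

/-- The set `X` attached to the sequence `b`. -/
def seqSet (b : ℕ → ℕ) : Set Circle1 :=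
  {0} ∪ {x : Circle1 | ∃ n : ℕ, x = circleProj (1 / (b n : ℝ)) ∨ x = -circleProj (1 / (b n : ℝ))}

lemma circleProj_add (x y : ℝ) : circleProj (x + y) = circleProj x + circleProj y := rfl

lemma circleProj_sub (x y : ℝ) : circleProj (x - y) = circleProj x - circleProj y := rfl

lemma circleProj_neg (x : ℝ) : circleProj (-x) = -circleProj x := rfl

lemma circleProj_mul (m : ℕ) (x : ℝ) : circleProj (m * x) = m • circleProj x := by
  rw [← nsmul_eq_mul]; rfl

lemma circleProj_eq_zero {x : ℝ} : circleProj x = 0 ↔ ∃ k : ℤ, x = k := by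
  unfold circleProj
  rw [AddCircle.coe_eq_zero_iff]
  simp [eq_comm]

lemma circleProj_eq {x y : ℝ} : circleProj x = circleProj y ↔ ∃ k : ℤ, x - y = k := by
  rw [← sub_eq_zero, ← circleProj_sub, circleProj_eq_zero]

lemma mem_Tplus {r : ℝ} : circleProj r ∈ Tplus ↔ ∃ k : ℤ, |r - k| ≤ 1 / 4 := by
  constructor
  · rintro ⟨s, ⟨h1, h2⟩, h⟩
    obtain ⟨k, hk⟩ := circleProj_eq.1 h.symm
    exact ⟨k, abs_le.2 ⟨by linarith, by linarith⟩⟩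
  · rintro ⟨k, hk⟩
    rw [abs_le] at hk
    exact ⟨r - k, ⟨by linarith, by linarith⟩, circleProj_eq.2 ⟨-k, by push_cast; ring⟩⟩

/-- A point of `𝕋₊` whose double is in `𝕋₊` has a representative in `[-1/8, 1/8]`. -/
lemma exists_rep_of_double {y : Circle1} (h1 : y ∈ Tplus) (h2 : 2 • y ∈ Tplus) :
    ∃ r : ℝ, |r| ≤ 1 / 8 ∧ circleProj r = y := by
  obtain ⟨r, ⟨ha, hb⟩, rfl⟩ := h1
  rw [← circleProj_mul, mem_Tplus] at h2
  obtain ⟨k, hk⟩ := h2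
  rw [abs_le] at hk
  push_cast at hk
  have k1 : k < 1 := by
    have : (k : ℝ) < 1 := by linarith
    exact_mod_cast this
  have k2 : -1 < k := by
    have : (-1 : ℝ) < k := by linarith
    exact_mod_cast this
  obtain rfl : k = 0 := by omega
  refine ⟨r, abs_le.2 ⟨?_, ?_⟩, rfl⟩ <;> push_cast at hk <;> linarith

/-- If `3y` is in `π([-1/8, 1/8])`, then `y` is within `1/24` of `0` or `±1/3`, and membership in
`𝕋₊` leaves only `0`. -/
lemma two_nsmul_mem {y : Circle1} (h : y ∈ Tplus)
    (h3 : ∃ r : ℝ, |r| ≤ 1 / 8 ∧ circleProj r = 3 • y) : 2 • y ∈ Tplus := by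
  obtain ⟨r, ⟨ha, hb⟩, rfl⟩ := h
  obtain ⟨s, hs, h3⟩ := h3
  rw [← circleProj_mul] at h3
  obtain ⟨k, hk⟩ := circleProj_eq.1 h3
  rw [abs_le] at hs
  push_cast at hk
  have k1 : k < 1 := by
    have : (k : ℝ) < 1 := by linarith
    exact_mod_cast this
  have k2 : -1 < k := by
    have : (-1 : ℝ) < k := by linarith
    exact_mod_cast this
  obtain rfl : k = 0 := by omega
  rw [← circleProj_mul, mem_Tplus]
  push_cast at hk ⊢
  refine ⟨0, abs_le.2 ⟨?_, ?_⟩⟩ <;> push_cast <;> linarith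

/-- If `4y` is in `π([-1/8, 1/8])` and `y ∈ 𝕋₊`, then `y` is within `1/32` of `0`, or of `±1/4` on
the side of `0`, so `5y` is within `5/32` of the same point on the same side. -/
lemma five_nsmul_mem {y : Circle1} (h : y ∈ Tplus)
    (h4 : ∃ r : ℝ, |r| ≤ 1 / 8 ∧ circleProj r = 4 • y) : 5 • y ∈ Tplus := by
  obtain ⟨r, ⟨ha, hb⟩, rfl⟩ := h
  obtain ⟨s, hs, h4⟩ := h4
  rw [← circleProj_mul] at h4
  obtain ⟨k, hk⟩ := circleProj_eq.1 h4
  rw [abs_le] at hs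
  push_cast at hk
  have k1 : k < 2 := by
    have : (k : ℝ) < 2 := by linarith
    exact_mod_cast this
  have k2 : -2 < k := by
    have : (-2 : ℝ) < k := by linarith
    exact_mod_cast this
  rw [← circleProj_mul, mem_Tplus]
  push_cast
  -- `4r` is within `1/8` of `-k`, and `5r` is then within `1/4` of the same integer
  refine ⟨-k, ?_⟩
  have : k = -1 ∨ k = 0 ∨ k = 1 := by omega
  rcases this with rfl | rfl | rfl <;> push_cast at hk ⊢ <;>
    exact abs_le.2 ⟨by linarith, by linarith⟩

/-- A point of `𝕋₊` of order at most `3` vanishes, since `1/2` and `±1/3` are outside `𝕋₊`. -/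
lemma eq_zero_of_torsion {y : Circle1} (h : y ∈ Tplus) {m : ℕ} (h0 : 0 < m) (hm : m < 4)
    (hy : m • y = 0) : y = 0 := by
  obtain ⟨r, ⟨ha, hb⟩, rfl⟩ := h
  rw [← circleProj_mul, circleProj_eq_zero] at hy
  obtain ⟨k, hk⟩ := hy
  have hm' : (m : ℝ) ≤ 3 := by exact_mod_cast (by omega : m ≤ 3)
  have hm0 : (0 : ℝ) < m := by exact_mod_cast h0
  have k1 : k < 1 := by
    have : (k : ℝ) < 1 := by nlinarith
    exact_mod_cast this
  have k2 : -1 < k := by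
    have : (-1 : ℝ) < k := by nlinarith
    exact_mod_cast this
  obtain rfl : k = 0 := by omega
  have : r = 0 := by simpa [hm0.ne'] using hk
  exact circleProj_eq_zero.2 ⟨0, by simpa using this⟩

/-- No point strictly between two consecutive reciprocals lies in `X`. -/
lemma not_mem_of_between {b : ℕ → ℕ} (hb : StrictMono b) (hb0 : 1 < b 0) {k : ℕ} {t : ℝ}
    (h1 : 1 / (b (k + 1) : ℝ) < t) (h2 : t < 1 / (b k : ℝ)) : circleProj t ∉ seqSet b := by
  have two_le (n : ℕ) : 2 ≤ b n := by have := hb.monotone (Nat.zero_le n); omega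
  have pos (n : ℕ) : (0 : ℝ) < b n := by have := two_le n; positivity
  have half (n : ℕ) : 1 / (b n : ℝ) ≤ 1 / 2 :=
    one_div_le_one_div_of_le (by norm_num) (by exact_mod_cast two_le n)
  have anti {m n : ℕ} (h : m ≤ n) : 1 / (b n : ℝ) ≤ 1 / (b m : ℝ) :=
    one_div_le_one_div_of_le (pos m) (by exact_mod_cast hb.monotone h)
  have t0 : 0 < t := lt_trans (one_div_pos.2 (pos _)) h1
  have tk := half k
  rintro (h | ⟨n, h | h⟩)
  · obtain ⟨j, hj⟩ := circleProj_eq_zero.1 h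
    have j0 : (0 : ℝ) < j := by linarith
    have j1 : (j : ℝ) < 1 := by linarith
    have : 0 < j := by exact_mod_cast j0
    have : j < 1 := by exact_mod_cast j1
    omega
  · obtain ⟨j, hj⟩ := circleProj_eq.1 h
    have n0 := one_div_pos.2 (pos n)
    have n1 := half n
    have j0 : (-1 : ℝ) < j := by linarith
    have j1 : (j : ℝ) < 1 := by linarith
    have : -1 < j := by exact_mod_cast j0
    have : j < 1 := by exact_mod_cast j1
    obtain rfl : j = 0 := by omega
    push_cast at hj
    rcases le_or_gt n k with hn | hn
    · linarith [anti hn]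
    · linarith [anti (show k + 1 ≤ n from hn)]
  · rw [← circleProj_neg] at h
    obtain ⟨j, hj⟩ := circleProj_eq.1 h
    have n0 := one_div_pos.2 (pos n)
    have n1 := half n
    have j0 : (0 : ℝ) < j := by linarith
    have j1 : (j : ℝ) < 1 := by linarith
    have : 0 < j := by exact_mod_cast j0
    have : j < 1 := by exact_mod_cast j1
    omega

/-- If `X = {0} ∪ {± π(1/bₙ)}` is quasi-convex in `𝕋`, where `bₙ ∣ b_{n+1}` and
`qₙ = b_{n+1}/bₙ`, then (a) `b₀ ≥ 4`, (b) at most one index `n` has `qₙ = 2`, and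
(c) if `qₙ = 2`, then `q_{n+1} > 4`. -/
theorem stmt11 (b : ℕ → ℕ) (hb : StrictMono b) (hb0 : 1 < b 0)
    (hdvd : ∀ n : ℕ, b n ∣ b (n + 1))
    (hqc : IsQuasiConvex ({0} ∪ {x : Circle1 | ∃ n : ℕ,
        x = circleProj (1 / (b n : ℝ)) ∨ x = -circleProj (1 / (b n : ℝ))})) :
    4 ≤ b 0 ∧
    (∀ m n : ℕ, b (m + 1) / b m = 2 → b (n + 1) / b n = 2 → m = n) ∧
    (∀ n : ℕ, b (n + 1) / b n = 2 → 4 < b (n + 2) / b (n + 1)) := by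
  change qcHull (seqSet b) = seqSet b at hqc
  have two_le (n : ℕ) : 2 ≤ b n := by have := hb.monotone (Nat.zero_le n); omega
  have pos (n : ℕ) : (0 : ℝ) < b n := by have := two_le n; positivity
  have ratio (n : ℕ) : b (n + 1) = b (n + 1) / b n * b n := (Nat.div_mul_cancel (hdvd n)).symm
  have ratio_ge (n : ℕ) : 2 ≤ b (n + 1) / b n := by
    by_contra! h
    have h1 := ratio n
    have h2 := hb (Nat.lt_succ_self n)
    have h3 : b (n + 1) / b n * b n ≤ 1 * b n := Nat.mul_le_mul_right _ (by omega)
    simp only [Nat.succ_eq_add_one] at h2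
    omega
  have double_le (n : ℕ) : 2 * b n ≤ b (n + 1) := by
    rw [ratio n]; exact Nat.mul_le_mul_right _ (ratio_ge n)
  -- a point of the hull cannot lie strictly between consecutive reciprocals
  have key {k : ℕ} {t : ℝ} (h1 : 1 / (b (k + 1) : ℝ) < t) (h2 : t < 1 / (b k : ℝ))
      (h : ∀ χ ∈ polar (seqSet b), χ (circleProj t) ∈ Tplus) : False := by
    refine not_mem_of_between hb hb0 h1 h2 ?_
    rw [← hqc]
    exact h
  have hmem {χ : Circle1 →+ Circle1} (hχ : χ ∈ polar (seqSet b)) (n : ℕ) :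
      χ (circleProj (1 / (b n : ℝ))) ∈ Tplus := hχ.2 _ (Or.inr ⟨n, Or.inl rfl⟩)
  have hmem' {χ : Circle1 →+ Circle1} (hχ : χ ∈ polar (seqSet b)) (n : ℕ) :
      -χ (circleProj (1 / (b n : ℝ))) ∈ Tplus := by
    rw [← map_neg]; exact hχ.2 _ (Or.inr ⟨n, Or.inr rfl⟩)
  have step (n m : ℕ) (h : b (n + 1) / b n = m) :
      circleProj (1 / (b n : ℝ)) = m • circleProj (1 / (b (n + 1) : ℝ)) := by
    have hm : 0 < m := by have := ratio_ge n; omega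
    have hm' : (m : ℝ) ≠ 0 := by positivity
    have e : (b (n + 1) : ℝ) = m * b n := by
      have := ratio n
      rw [h] at this
      exact_mod_cast this
    rw [← circleProj_mul, e]
    congr 1
    have := (pos n).ne'
    field_simp
  have eighth (n : ℕ) (h : b (n + 1) / b n = 2) {χ : Circle1 →+ Circle1}
      (hχ : χ ∈ polar (seqSet b)) :
      ∃ r : ℝ, |r| ≤ 1 / 8 ∧ circleProj r = χ (circleProj (1 / (b (n + 1) : ℝ))) := by
    refine exists_rep_of_double (hmem hχ _) ?_
    rw [← map_nsmul, ← step n 2 h]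
    exact hmem hχ n
  have partB (m n : ℕ) (hmn : m < n) (hm : b (m + 1) / b m = 2) (hn : b (n + 1) / b n = 2) :
      False := by
    have em : (b (m + 1) : ℝ) = 2 * b m := by
      have := ratio m
      rw [hm] at this
      exact_mod_cast this
    have en : 4 * (b m : ℝ) ≤ b (n + 1) := by
      have h1 := double_le m
      have h2 := double_le n
      have h3 : b (m + 1) ≤ b n := hb.monotone hmn
      exact_mod_cast (by omega : 4 * b m ≤ b (n + 1))
    have p := pos m
    refine key (k := m) (t := 1 / (b (m + 1) : ℝ) + 1 / (b (n + 1) : ℝ)) ?_ ?_ ?_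
    · linarith [one_div_pos.2 (pos (n + 1))]
    · have h1 : 1 / (b (n + 1) : ℝ) ≤ 1 / (4 * b m) :=
        one_div_le_one_div_of_le (by positivity) en
      have h2 : 1 / (2 * b m : ℝ) + 1 / (4 * b m) < 1 / b m := by
        field_simp; norm_num
      rw [em]; linarith
    · intro χ hχ
      obtain ⟨r, hr, er⟩ := eighth m hm hχ
      obtain ⟨s, hs, es⟩ := eighth n hn hχ
      rw [circleProj_add, map_add, ← er, ← es, ← circleProj_add, mem_Tplus]
      rw [abs_le] at hr hs
      refine ⟨0, abs_le.2 ⟨?_, ?_⟩⟩ <;> push_cast <;> linarith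
  refine ⟨?_, ?_, ?_⟩
  · by_contra! h
    have h1 : 2 * b 0 ≤ b 1 := double_le 0
    have h2 : 2 * b 1 ≤ b 2 := double_le 1
    have e1 : 2 * (b 0 : ℝ) ≤ b 1 := by exact_mod_cast h1
    have e2 : 4 * (b 0 : ℝ) ≤ b 2 := by exact_mod_cast (by omega : 4 * b 0 ≤ b 2)
    have p := pos 0
    refine key (k := 0) (t := 1 / (b 0 : ℝ) - 1 / (b 2 : ℝ)) ?_ ?_ ?_
    · have h3 : 1 / (b 1 : ℝ) ≤ 1 / (2 * b 0) := one_div_le_one_div_of_le (by positivity) e1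
      have h4 : 1 / (b 2 : ℝ) ≤ 1 / (4 * b 0) := one_div_le_one_div_of_le (by positivity) e2
      have h5 : 1 / (2 * b 0 : ℝ) + 1 / (4 * b 0) < 1 / b 0 := by
        field_simp; norm_num
      simp only [zero_add]
      linarith
    · linarith [one_div_pos.2 (pos 2)]
    · intro χ hχ
      have hz : χ (circleProj (1 / (b 0 : ℝ))) = 0 := by
        refine eq_zero_of_torsion (hmem hχ 0) (m := b 0) (by omega) h ?_
        rw [← map_nsmul, ← circleProj_mul, mul_one_div_cancel p.ne',
          circleProj_eq_zero.2 ⟨1, by simp⟩, map_zero]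
      rw [circleProj_sub, map_sub, hz, zero_sub]
      exact hmem' hχ 2
  · intro m n hm hn
    rcases lt_trichotomy m n with h | h | h
    · exact (partB m n h hm hn).elim
    · exact h
    · exact (partB n m h hn hm).elim
  · intro n hn
    by_contra! h
    have hge := ratio_ge (n + 1)
    rw [show n + 1 + 1 = n + 2 from rfl] at hge
    have p := pos (n + 2)
    have inv (m : ℕ) (hm : b (n + 2) / b (n + 1) = m) :
        1 / (b (n + 1) : ℝ) = m * (1 / b (n + 2)) ∧
        1 / (b n : ℝ) = 2 * m * (1 / b (n + 2)) := by
      have e1 : (b (n + 2) : ℝ) = m * b (n + 1) := by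
        have := ratio (n + 1)
        rw [show n + 1 + 1 = n + 2 from rfl, hm] at this
        exact_mod_cast this
      have e2 : (b (n + 1) : ℝ) = 2 * b n := by
        have := ratio n
        rw [hn] at this
        exact_mod_cast this
      have hm0 : (m : ℝ) ≠ 0 := by
        have : 0 < m := by omega
        positivity
      have := (pos n).ne'
      rw [e1, e2]
      constructor <;> field_simp
    have hu : 0 < 1 / (b (n + 2) : ℝ) := one_div_pos.2 p
    have cases : b (n + 2) / b (n + 1) = 2 ∨ b (n + 2) / b (n + 1) = 3 ∨
        b (n + 2) / b (n + 1) = 4 := by omega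
    rcases cases with hq | hq | hq
    · exact partB n (n + 1) (Nat.lt_succ_self n) hn hq
    · obtain ⟨i1, i2⟩ := inv 3 hq
      push_cast at i1 i2
      refine key (k := n + 1) (t := (2 : ℕ) * (1 / (b (n + 2) : ℝ))) ?_ ?_ ?_
      · push_cast; linarith
      · push_cast; linarith
      · intro χ hχ
        rw [circleProj_mul, map_nsmul]
        refine two_nsmul_mem (hmem hχ _) ?_
        rw [← map_nsmul, ← step (n + 1) 3 hq]
        exact eighth n hn hχ
    · obtain ⟨i1, i2⟩ := inv 4 hq
      push_cast at i1 i2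
      refine key (k := n) (t := (5 : ℕ) * (1 / (b (n + 2) : ℝ))) ?_ ?_ ?_
      · push_cast; linarith
      · push_cast; linarith
      · intro χ hχ
        rw [circleProj_mul, map_nsmul]
        refine five_nsmul_mem (hmem hχ _) ?_
        rw [← map_nsmul, ← step (n + 1) 4 hq]
        exact eighth n hn hχ
end
end

section
/- Let $\{b_n\}_{n=0}^\infty$ be an increasing sequence of natural numbers such that $b_0 > 1$ and $b_n \mid b_{n+1}$ for every $n \in \mathbb{N}$, let $X = \{0\} \cup \{\pm \pi(1/b_n) \mid n \in \mathbb{N}\} \subseteq \mathbb{T}$, and put $q_n = b_{n+1}/b_n$. If $X$ is quasi-convex in $\mathbb{T}$, then for every $n \in \mathbb{N}$, if $4$ does not divide $b_{n+1}$, then $q_n \neq 3$. -/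
/-!
Suppose `b (n+1) = 3 * b n` and put `m = b n`. The point `2/(3m)` is in the quasi-convex hull of
`X` but not in `X`. Indeed, for a character `χ` in the polar, let `t = χ(1/(3m))`, represented by
`y ∈ [-1/4, 1/4]`. Since `3t = χ(1/m)` also lies in `𝕋₊`, either `|y| ≤ 1/12`, so that
`2t ∈ 𝕋₊`, or `y = ±1/4`; the latter has order `4`, while `3m • t = 0`, so it would force
`4 ∣ 3m` (`two_nsmul_mem_Tplus`). On the other hand `2/(3m)` is not `0`, it is not any `-1/bⱼ`
because `0 < 2/(3m) + 1/bⱼ < 1`, and it is not any `1/bⱼ` because no `bⱼ` lies strictly between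
`m` and `3m`.
-/

noncomputable section

lemma coe_eq_coe_iff_int (r s : ℝ) : circleProj r = circleProj s ↔ ∃ k : ℤ, r - s = k := by
  unfold circleProj
  rw [← sub_eq_zero, ← AddCircle.coe_sub, AddCircle.coe_eq_zero_iff]
  simp only [zsmul_eq_mul, mul_one]
  exact ⟨fun ⟨k, h⟩ => ⟨k, h.symm⟩, fun ⟨k, h⟩ => ⟨k, h.symm⟩⟩

/-- An element `t` with `t, 3t ∈ 𝕋₊` whose order divides some `N` not divisible by `4`
satisfies `2t ∈ 𝕋₊`: the only exceptions without the order condition are `t = ±1/4`. -/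
lemma two_nsmul_mem_Tplus (t : Circle1) (N : ℕ) (hN : ¬ 4 ∣ N) (h0 : N • t = 0)
    (h1 : t ∈ Tplus) (h3 : 3 • t ∈ Tplus) : 2 • t ∈ Tplus := by
  obtain ⟨y, ⟨hy1, hy2⟩, rfl⟩ := h1
  obtain ⟨z, ⟨hz1, hz2⟩, hz⟩ := h3
  have e (j : ℕ) : j • circleProj y = circleProj (j * y) := by
    unfold circleProj; rw [← AddCircle.coe_nsmul, nsmul_eq_mul]
  rw [e, coe_eq_coe_iff_int] at hz
  have h0' : circleProj (N * y) = circleProj 0 := by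
    rw [← e, h0]; simp [circleProj]
  rw [coe_eq_coe_iff_int] at h0'
  obtain ⟨k, hk⟩ := hz
  obtain ⟨l, hl⟩ := h0'
  push_cast at hk
  have hk1 : -1 ≤ k := by
    have : (-2 : ℝ) < k := by linarith
    have : (-2 : ℤ) < k := by exact_mod_cast this
    omega
  have hk2 : k ≤ 1 := by
    have : (k : ℝ) < 2 := by linarith
    have : k < (2 : ℤ) := by exact_mod_cast this
    omega
  rw [e]
  obtain rfl | rfl | rfl : k = -1 ∨ k = 0 ∨ k = 1 := by omega
  · exfalso
    push_cast at hk
    have hy : y = 1 / 4 := by linarith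
    rw [hy] at hl
    have h : (N : ℝ) = 4 * l := by linarith
    have h : (N : ℤ) = 4 * l := by exact_mod_cast h
    omega
  · push_cast at hk
    exact ⟨_, ⟨by push_cast; linarith, by push_cast; linarith⟩, rfl⟩
  · exfalso
    push_cast at hk
    have hy : y = -(1 / 4) := by linarith
    rw [hy] at hl
    have h : (N : ℝ) = -4 * l := by linarith
    have h : (N : ℤ) = -4 * l := by exact_mod_cast h
    omega

/-- If `X = {0} ∪ {± π(1/bₙ)}` is quasi-convex in `𝕋`, then for every `n`,
`4 ∤ b_{n+1}` implies `qₙ ≠ 3`. -/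
theorem stmt12 (b : ℕ → ℕ) (hb : StrictMono b) (hb0 : 1 < b 0)
    (hdvd : ∀ n : ℕ, b n ∣ b (n + 1))
    (hqc : IsQuasiConvex ({0} ∪ {x : Circle1 | ∃ n : ℕ,
        x = circleProj (1 / (b n : ℝ)) ∨ x = -circleProj (1 / (b n : ℝ))})) :
    ∀ n : ℕ, ¬ (4 ∣ b (n + 1)) → b (n + 1) / b n ≠ 3 := by
  intro n h4 hq
  have hge (j : ℕ) : 2 ≤ b j := hb0.trans_le (hb.monotone (Nat.zero_le j))
  have hge' (j : ℕ) : (2 : ℝ) ≤ b j := by exact_mod_cast hge j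
  have h3 : b (n + 1) = b n * 3 := by rw [← hq, Nat.mul_div_cancel' (hdvd n)]
  have h3r : (b (n + 1) : ℝ) = b n * 3 := by exact_mod_cast h3
  have hm := hge' n
  have hM := hge' (n + 1)
  have e (j : ℕ) (y : ℝ) : j • circleProj y = circleProj (j * y) := by
    unfold circleProj; rw [← AddCircle.coe_nsmul, nsmul_eq_mul]
  have hmem : 2 • circleProj (1 / (b (n + 1) : ℝ)) ∈ ({0} ∪ {x : Circle1 | ∃ n : ℕ,
        x = circleProj (1 / (b n : ℝ)) ∨ x = -circleProj (1 / (b n : ℝ))}) := by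
    rw [← hqc]
    rintro χ ⟨-, hχ⟩
    rw [map_nsmul]
    apply two_nsmul_mem_Tplus _ (b (n + 1)) h4
    · rw [← map_nsmul, e, mul_one_div_cancel (by positivity)]
      have : circleProj 1 = 0 := AddCircle.coe_period 1
      rw [this, map_zero]
    · exact hχ _ (Or.inr ⟨n + 1, Or.inl rfl⟩)
    · rw [← map_nsmul, e]
      refine hχ _ (Or.inr ⟨n, Or.inl ?_⟩)
      rw [h3r]
      congr 1
      push_cast
      field_simp
  rw [e] at hmem
  have hx0 : (0 : ℝ) < (2 : ℕ) * (1 / (b (n + 1) : ℝ)) := by positivity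
  have hx1 : (2 : ℕ) * (1 / (b (n + 1) : ℝ)) ≤ 1 / 3 := by
    rw [h3r]; push_cast
    rw [mul_one_div, div_le_div_iff₀ (by positivity) (by norm_num)]
    linarith
  have hinv (j : ℕ) : 0 < 1 / (b j : ℝ) ∧ 1 / (b j : ℝ) ≤ 1 / 2 := by
    have := hge' j
    exact ⟨by positivity, one_div_le_one_div_of_le (by norm_num) this⟩
  rcases hmem with h | ⟨j, h | h⟩
  · have h : circleProj ((2 : ℕ) * (1 / (b (n + 1) : ℝ))) = circleProj 0 := by
      rw [Set.mem_singleton_iff.1 h]; simp [circleProj]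
    obtain ⟨k, hk⟩ := (coe_eq_coe_iff_int _ _).1 h
    have a1 : (0 : ℝ) < k := by linarith
    have a2 : (k : ℝ) < 1 := by linarith
    have a1 : 0 < k := by exact_mod_cast a1
    have a2 : k < 1 := by exact_mod_cast a2
    omega
  · obtain ⟨k, hk⟩ := (coe_eq_coe_iff_int _ _).1 h
    obtain ⟨i1, i2⟩ := hinv j
    have a1 : (-1 : ℝ) < k := by linarith
    have a2 : (k : ℝ) < 1 := by linarith
    have a1 : -1 < k := by exact_mod_cast a1
    have a2 : k < 1 := by exact_mod_cast a2
    obtain rfl : k = 0 := by omega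
    have hj := hge' j
    have h2 : (2 : ℝ) * b j = b (n + 1) := by
      push_cast at hk
      field_simp at hk
      linarith
    have h2 : 2 * b j = b (n + 1) := by exact_mod_cast h2
    -- `2 * b j = 3 * b n` places `b j` strictly between `b n` and `b (n + 1)`
    have l1 : n < j := hb.lt_iff_lt.1 (by have := hge n; omega)
    have l2 : j < n + 1 := hb.lt_iff_lt.1 (by have := hge j; omega)
    omega
  · have h : circleProj ((2 : ℕ) * (1 / (b (n + 1) : ℝ))) = circleProj (-(1 / (b j : ℝ))) := by
      rw [h]; simp [circleProj]
    obtain ⟨k, hk⟩ := (coe_eq_coe_iff_int _ _).1 h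
    obtain ⟨i1, i2⟩ := hinv j
    have a1 : (0 : ℝ) < k := by linarith
    have a2 : (k : ℝ) < 1 := by linarith
    have a1 : 0 < k := by exact_mod_cast a1
    have a2 : k < 1 := by exact_mod_cast a2
    omega
end
end
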